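/- Suppose q satisfies condition A for x ≥ x₀ and |q(x)| → +∞ as x → +∞. Fix α₀, α₁ ∈ ℂ with |α₀|+|α₁| ≠ 0. Then the spectrum of L_U is discrete: the set S = { λ ∈ ℂ : there exists a nontrivial solution y of −y″+(q−λ)y=0 with y ∈ L₂(ℝ₊) and α₀y(0)+α₁y′(0)=0 } has no accumulation point in ℂ, and for every λ ∉ S there exists a bounded linear operator R : L₂(ℝ₊) → L₂(ℝ₊) such that for every f ∈ L₂(ℝ₊), Rf has a representative y which is a solution of −y″+(q−λ)y=f with α₀y(0)+α₁y′(0)=0. -/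

import Mathlib

/-!
The spectrum is discrete because the potential is coercive for the multiplier `p = √q`.
For every `lam`, since `‖q‖ → ∞`, the real part of `y' * conj p * conj y` has, along solutions of
`y'' = (q - lam) y`, a derivative on some half-line `[x₁, ∞)` bounded below by a positive quadratic
form in `(y, y')` (`Coer`, obtained from condition A).

* Solutions with nonpositive energy at larger and larger points form nested compact sets of
  normalized initial data, so a nontrivial square integrable solution `ψ` exists
  (`exists_decaying`). It is unique up to a scalar, because a nonzero Wronskian would be incompatible
  with square integrability of both solutions (`wronskian_eq_zero`). Thus `lam` is an eigenvalue iff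
  `ψ` satisfies the boundary condition (`mem_eigs_iff`).
* If it does not, let `φ` be the solution that satisfies the boundary condition. The Green's function
  built from `φ` and `ψ` is bounded in `L²`: on `[0, x₁]` this is a plain estimate, and on `[x₁, n]`
  one uses the energy inequality (`green_bound`). This gives the resolvent (`Coer.exists_resolvent`).
* Near a point `z`, a Neumann series in the resolvent of an auxiliary boundary condition perturbs `ψ`
  analytically in `lam`, so the eigenvalues near `z` either fill a neighbourhood or avoid a punctured
  one (`CondA.dichotomy`). A large negative number is not an eigenvalue (`CondA.exists_not_mem`), and
  connectedness of `ℂ` excludes the first alternative everywhere (`not_accPt_of_dichotomy`).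
-/

open MeasureTheory Filter Topology Complex

noncomputable section

/-- The open sector `Π_κ = {z ≠ 0 : arg z ∈ (-π+κ, π-κ)}`. -/
def PiSector (κ : ℝ) : Set ℂ :=
  {z : ℂ | z ≠ 0 ∧ -Real.pi + κ < z.arg ∧ z.arg < Real.pi - κ}

/-- `f` is locally absolutely continuous on `[a,∞)` with a.e. derivative `f'`:
`f'` is locally integrable there and `f` is recovered from `f'` by integration. -/
def LocACOn (f f' : ℝ → ℂ) (a : ℝ) : Prop :=
  (∀ b, a ≤ b → IntervalIntegrable f' volume a b) ∧
  ∀ x, a ≤ x → f x = f a + ∫ t in a..x, f' t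

/-- `y` (with first derivative `y'`) is a solution of `-y'' + q y = f` on `ℝ₊`:
`y, y'` are locally absolutely continuous on `[0,∞)` and the a.e. derivative of
`y'` equals `q y - f`. -/
def IsSol (q f y y' : ℝ → ℂ) : Prop :=
  LocACOn y y' 0 ∧ LocACOn y' (fun x => q x * y x - f x) 0

/-- `y` is nontrivial on `ℝ₊`. -/
def NontrivialSol (y : ℝ → ℂ) : Prop := ∃ x, 0 ≤ x ∧ y x ≠ 0

/-- membership in the weighted space `L₂(ℝ₊, w)`. -/
def MemL2 (w : ℝ → ℝ) (f : ℝ → ℂ) : Prop :=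
  AEStronglyMeasurable f (volume.restrict (Set.Ici (0:ℝ))) ∧
  IntegrableOn (fun x => w x * ‖f x‖ ^ 2) (Set.Ici (0:ℝ)) volume

/-- the branch `p = √q` with positive real part (principal branch). -/
def sqrtQ (q : ℝ → ℂ) (x : ℝ) : ℂ := (q x) ^ ((1 : ℂ) / 2)

/-- the a.e. derivative of `sqrtQ q`, where `q'` is the a.e. derivative of `q`. -/
def sqrtQD (q q' : ℝ → ℂ) (x : ℝ) : ℂ := q' x / (2 * sqrtQ q x)

/-- the weight `ρ = Re p - (1/2)|p'/p|`. -/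
def rho (q q' : ℝ → ℂ) (x : ℝ) : ℝ :=
  (sqrtQ q x).re - (1 / 2) * ‖sqrtQD q q' x / sqrtQ q x‖

/-- Condition A for `q` on `[x₀,∞)` with constant `C`, where `q'` is the
a.e. derivative of `q`: `q ∈ L¹loc(ℝ₊)`, `q` is locally absolutely continuous
on `[x₀,∞)`, `q` takes values in a sector `Π_κ` on `[x₀,∞)`, the branch
`p = √q` has positive real part there, and
`Re p ≥ C + (1/2)|p'/p|` a.e. on `[x₀,∞)`. -/
def CondA (q q' : ℝ → ℂ) (x₀ C : ℝ) : Prop :=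
  LocallyIntegrableOn q (Set.Ici (0:ℝ)) volume ∧
  LocACOn q q' x₀ ∧
  (∃ κ, 0 ≤ κ ∧ ∀ x, x₀ ≤ x → q x ∈ PiSector κ) ∧
  (∀ x, x₀ ≤ x → 0 < (sqrtQ q x).re) ∧
  0 < C ∧
  ∀ᵐ x : ℝ, x₀ ≤ x → C + (1 / 2) * ‖sqrtQD q q' x / sqrtQ q x‖ ≤ (sqrtQ q x).re

/-- The set `𝒩` of spectral parameters `lam` such that `q - lam` satisfies
condition A for `x ≥ x₁(lam)` for some `x₁(lam) ≥ 0` (note `(q - lam)' = q'`). -/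
def NSet (q q' : ℝ → ℂ) : Set ℂ :=
  {lam : ℂ | ∃ x₁ C, 0 ≤ x₁ ∧ CondA (fun x => q x - lam) q' x₁ C}

/-! ### Locally absolutely continuous functions -/

namespace LocACOn

lemma ii {f f' : ℝ → ℂ} {a b c : ℝ} (h : LocACOn f f' a) (hb : a ≤ b) (hc : a ≤ c) :
    IntervalIntegrable f' volume b c :=
  (h.1 b hb).symm.trans (h.1 c hc)

lemma sub_eq {f f' : ℝ → ℂ} {a b c : ℝ} (h : LocACOn f f' a) (hb : a ≤ b) (hc : a ≤ c) :
    f c - f b = ∫ t in b..c, f' t := by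
  rw [h.2 c hc, h.2 b hb, ← intervalIntegral.integral_add_adjacent_intervals (h.1 b hb)
    (h.ii hb hc)]
  ring

lemma mono {f f' : ℝ → ℂ} {a b : ℝ} (h : LocACOn f f' a) (hab : a ≤ b) : LocACOn f f' b :=
  ⟨fun c hc => h.ii hab (hab.trans hc), fun c hc => by
    rw [← h.sub_eq hab (hab.trans hc)]; ring⟩

lemma ac {f f' : ℝ → ℂ} {a b : ℝ} (h : LocACOn f f' a) (hab : a ≤ b) :
    AbsolutelyContinuousOnInterval f a b := by
  have h1 := ((h.1 b hab).norm).absolutelyContinuousOnInterval_intervalIntegral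
    (c := a) (by simp)
  rw [absolutelyContinuousOnInterval_iff] at h1 ⊢
  intro ε hε
  obtain ⟨δ, hδ, H⟩ := h1 ε hε
  refine ⟨δ, hδ, fun E hE hl => lt_of_le_of_lt (Finset.sum_le_sum fun i hi => ?_) (H E hE hl)⟩
  have hmem := hE.1 i hi
  rw [Set.uIcc_of_le hab] at hmem
  have h3 := hmem.1
  have h4 := hmem.2
  rw [dist_comm, dist_eq_norm, h.sub_eq h3.1 h4.1, dist_comm, Real.dist_eq,
    intervalIntegral.integral_interval_sub_left (h.ii le_rfl h4.1).norm (h.ii le_rfl h3.1).norm]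
  exact intervalIntegral.norm_integral_le_abs_integral_norm

lemma continuousOn {f f' : ℝ → ℂ} {a : ℝ} (h : LocACOn f f' a) : ContinuousOn f (Set.Ici a) := by
  intro x hx
  have hx' : a ≤ x := hx
  have h1 : ContinuousOn f (Set.Icc a (x + 1)) := by
    have := (h.ac (b := x + 1) (by linarith)).continuousOn
    rwa [Set.uIcc_of_le (by linarith)] at this
  have h2 : ContinuousWithinAt f (Set.Icc a (x + 1)) x := h1 x ⟨hx', by linarith⟩
  refine h2.mono_of_mem_nhdsWithin ?_
  have : Set.Icc a (x+1) = Set.Ici a ∩ Set.Iic (x+1) := by ext; simp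
  rw [this]
  exact inter_mem_nhdsWithin _ (Iic_mem_nhds (by linarith))

lemma ae_hasDerivAt {f f' : ℝ → ℂ} {a : ℝ} (h : LocACOn f f' a) :
    ∀ᵐ x : ℝ, a < x → HasDerivAt f (f' x) x := by
  have h1 : ∀ n : ℕ, ∀ᵐ x : ℝ, x ∈ Set.Ioo a (a + n) → HasDerivAt f (f' x) x := by
    intro n
    have hn : a ≤ a + n := by simp
    filter_upwards [(h.1 (a + n) hn).ae_hasDerivAt_integral] with x hx hxm
    have h2 := hx (by rw [Set.uIcc_of_le hn]; exact ⟨hxm.1.le, hxm.2.le⟩) a (by simp)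
    have h3 := h2.const_add (f a)
    refine h3.congr_of_eventuallyEq ?_
    filter_upwards [Ioi_mem_nhds hxm.1] with y hy
    exact h.2 y (le_of_lt hy)
  filter_upwards [ae_all_iff.2 h1] with x hx hax
  obtain ⟨n, hn⟩ := exists_nat_gt (x - a)
  exact hx n ⟨hax, by linarith⟩

/-- The converse of `LocACOn.ac` and `LocACOn.ae_hasDerivAt`: the fundamental theorem of calculus
for absolutely continuous functions. -/
lemma of_ac {f f' : ℝ → ℂ} {a : ℝ} (h : ∀ b, a ≤ b → AbsolutelyContinuousOnInterval f a b)
    (hd : ∀ᵐ x : ℝ, a < x → HasDerivAt f (f' x) x)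
    (hi : ∀ b, a ≤ b → IntervalIntegrable f' volume a b) : LocACOn f f' a := by
  refine ⟨hi, fun b hb => ?_⟩
  let F : ℝ → ℂ := fun x => f a + ∫ t in a..x, f' t
  have hF : LocACOn F f' a := ⟨hi, fun x _ => by simp [F]⟩
  have h1 : AbsolutelyContinuousOnInterval (f - F) a b := (h b hb).sub (hF.ac hb)
  have h2 : ∀ᵐ x, x ∈ Set.uIcc a b → HasDerivAt (f - F) 0 x := by
    have ha : ∀ᵐ x : ℝ, x ≠ a := by simp [ae_iff, measure_singleton]
    filter_upwards [hd, hF.ae_hasDerivAt, ha] with x hx hx' hxa hxm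
    rw [Set.uIcc_of_le hb] at hxm
    have hlt : a < x := lt_of_le_of_ne hxm.1 hxa.symm
    simpa using (hx hlt).sub (hx' hlt)
  obtain ⟨K, hK⟩ := h1.const_of_ae_hasDerivAt_zero h2
  have e1 := hK a (by simp)
  have e2 := hK b (by simp)
  simp only [Pi.sub_apply, F, intervalIntegral.integral_same] at e1 e2
  have : K = 0 := by rw [← e1]; ring
  rw [this] at e2
  exact sub_eq_zero.1 e2

lemma ii_mul {f f' g : ℝ → ℂ} {a b c : ℝ} (h : LocACOn f f' a) (hb : a ≤ b) (hc : a ≤ c)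
    (hg : IntervalIntegrable g volume b c) : IntervalIntegrable (fun x => f x * g x) volume b c :=
  hg.continuousOn_mul (h.continuousOn.mono fun _ hx => by
    rcases Set.mem_uIcc.1 hx with h | h <;> exact (by linarith [h.1] : a ≤ _))

lemma mul {f f' g g' : ℝ → ℂ} {a : ℝ} (hf : LocACOn f f' a) (hg : LocACOn g g' a) :
    LocACOn (fun x => f x * g x) (fun x => f' x * g x + f x * g' x) a := by
  refine of_ac (fun b hb => ?_) ?_ fun b hb => ?_
  · exact (hf.ac hb).smul (hg.ac hb)
  · filter_upwards [hf.ae_hasDerivAt, hg.ae_hasDerivAt] with x h1 h2 hx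
    exact (h1 hx).mul (h2 hx)
  · refine IntervalIntegrable.add ?_ (hf.ii_mul le_rfl hb (hg.1 b hb))
    exact (hg.ii_mul le_rfl hb (hf.1 b hb)).congr (fun x _ => mul_comm _ _)

lemma add {f f' g g' : ℝ → ℂ} {a : ℝ} (hf : LocACOn f f' a) (hg : LocACOn g g' a) :
    LocACOn (fun x => f x + g x) (fun x => f' x + g' x) a :=
  ⟨fun b hb => (hf.1 b hb).add (hg.1 b hb), fun b hb => by
    beta_reduce
    rw [hf.2 b hb, hg.2 b hb, intervalIntegral.integral_add (hf.1 b hb) (hg.1 b hb)]; ring⟩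

lemma const_mul {f f' : ℝ → ℂ} {a : ℝ} (k : ℂ) (hf : LocACOn f f' a) :
    LocACOn (fun x => k * f x) (fun x => k * f' x) a :=
  ⟨fun b hb => (hf.1 b hb).const_mul k, fun b hb => by
    beta_reduce
    rw [hf.2 b hb, intervalIntegral.integral_const_mul]; ring⟩

lemma conj {f f' : ℝ → ℂ} {a : ℝ} (hf : LocACOn f f' a) :
    LocACOn (fun x => starRingEnd ℂ (f x)) (fun x => starRingEnd ℂ (f' x)) a := by
  refine ⟨fun b hb => ?_, fun b hb => ?_⟩
  · have := hf.1 b hb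
    exact ⟨conjCLE.toContinuousLinearMap.integrable_comp this.1,
      conjCLE.toContinuousLinearMap.integrable_comp this.2⟩
  · beta_reduce
    rw [hf.2 b hb, map_add]
    congr 1
    exact (conjCLE.toContinuousLinearMap.intervalIntegral_comp_comm (hf.1 b hb)).symm

lemma congr_ae {f f' g' : ℝ → ℂ} {a : ℝ} (hf : LocACOn f f' a)
    (h : ∀ᵐ x : ℝ, a ≤ x → f' x = g' x) : LocACOn f g' a := by
  have hc : ∀ b, a ≤ b → ∀ᵐ x, x ∈ Set.uIoc a b → f' x = g' x := by
    intro b hb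
    filter_upwards [h] with x hx hxm
    rw [Set.uIoc_of_le hb] at hxm
    exact hx hxm.1.le
  exact ⟨fun b hb => (hf.1 b hb).congr_ae ((ae_restrict_iff' measurableSet_uIoc).2 (hc b hb)),
    fun b hb => by rw [hf.2 b hb, intervalIntegral.integral_congr_ae (hc b hb)]⟩

lemma congr_left {f g f' : ℝ → ℂ} {a : ℝ} (hf : LocACOn f f' a)
    (h : ∀ x, a ≤ x → f x = g x) : LocACOn g f' a :=
  ⟨hf.1, fun b hb => by rw [← h b hb, ← h a le_rfl, hf.2 b hb]⟩

lemma const (k : ℂ) (a : ℝ) : LocACOn (fun _ => k) (fun _ => 0) a :=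
  ⟨fun b _ => by simp, fun b _ => by simp⟩

/-- A lower bound for the real part of the derivative integrates. -/
lemma re_le {f f' : ℝ → ℂ} {g : ℝ → ℝ} {a b c : ℝ} (hf : LocACOn f f' a) (hab : a ≤ b)
    (hbc : b ≤ c) (hg : IntervalIntegrable g volume b c)
    (h : ∀ᵐ x : ℝ, a ≤ x → x ≤ c → g x ≤ (f' x).re) :
    (f b).re + ∫ t in b..c, g t ≤ (f c).re := by
  have hi := hf.ii hab (hab.trans hbc)
  have h1 : (∫ t in b..c, f' t).re = ∫ t in b..c, (f' t).re :=
    (reCLM.intervalIntegral_comp_comm hi).symm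
  have h2 : ∫ t in b..c, g t ≤ ∫ t in b..c, (f' t).re := by
    refine intervalIntegral.integral_mono_ae_restrict hbc hg
      ⟨reCLM.integrable_comp hi.1, reCLM.integrable_comp hi.2⟩ ?_
    refine (ae_restrict_iff' measurableSet_Icc).2 ?_
    filter_upwards [h] with x hx hxm
    exact hx (hab.trans hxm.1) hxm.2
  have h3 := congrArg Complex.re (hf.sub_eq hab (hab.trans hbc))
  rw [sub_re, h1] at h3
  linarith

end LocACOn

/-! ### The initial value problem -/

/-- The `n`-th term of the Picard (Neumann) series for `y'' = Q y`, `y 0 = c`, `y' 0 = d`,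
written as a pair (value, derivative). -/
def picardTerm (Q : ℝ → ℂ) (c d : ℂ) : ℕ → ℝ → ℂ × ℂ
  | 0 => fun _ => (c, d)
  | n + 1 => fun x =>
      (∫ t in (0:ℝ)..x, (picardTerm Q c d n t).2,
        ∫ t in (0:ℝ)..x, Q t * (picardTerm Q c d n t).1)

/-- `G ^ (n+1) / (n+1)!` is the primitive of `k G ^ n / n!` when `G` is the primitive of `k`. -/
lemma integral_pow_primitive {k : ℝ → ℝ} (hk : ∀ b, 0 ≤ b → IntervalIntegrable k volume 0 b)
    (n : ℕ) {x : ℝ} (hx : 0 ≤ x) :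
    IntervalIntegrable (fun t => k t * ((∫ s in (0:ℝ)..t, k s) ^ n / n.factorial)) volume 0 x ∧
    ∫ t in (0:ℝ)..x, k t * ((∫ s in (0:ℝ)..t, k s) ^ n / n.factorial) =
      (∫ s in (0:ℝ)..x, k s) ^ (n + 1) / (n + 1).factorial := by
  set G : ℝ → ℝ := fun t => ∫ s in (0:ℝ)..t, k s with hG
  have h0 : LocACOn (fun x => (G x : ℂ)) (fun x => (k x : ℂ)) 0 :=
    ⟨fun b hb => ⟨(hk b hb).1.ofReal, (hk b hb).2.ofReal⟩, fun x _ => by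
      simp only [hG]
      rw [intervalIntegral.integral_ofReal]; simp⟩
  have hpow : ∀ n : ℕ, LocACOn (fun x => (G x : ℂ) ^ (n + 1))
      (fun x => (n + 1) * (k x * (G x : ℂ) ^ n)) 0 := by
    intro n
    induction n with
    | zero => simpa using h0
    | succ n ih =>
      refine ((ih.mul h0).congr_left fun x _ => (pow_succ _ _).symm).congr_ae ?_
      refine Eventually.of_forall fun x _ => ?_
      push_cast
      ring
  have hre : ∀ t, ((k t * (G t ^ n / n.factorial) : ℝ) : ℂ)
      = ((n + 1).factorial : ℂ)⁻¹ * ((n + 1) * (k t * (G t : ℂ) ^ n)) := by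
    intro t
    have h1 : (n.factorial : ℂ) ≠ 0 := by exact_mod_cast n.factorial_ne_zero
    have h2 : (n : ℂ) + 1 ≠ 0 := by exact_mod_cast n.succ_ne_zero
    rw [Nat.factorial_succ]
    push_cast
    field_simp
  have hi := ((hpow n).const_mul ((n + 1).factorial : ℂ)⁻¹)
  simp_rw [← hre] at hi
  constructor
  · have := hi.1 x hx
    have h3 : IntervalIntegrable
        (fun t => (((k t * (G t ^ n / n.factorial) : ℝ) : ℂ)).re) volume 0 x :=
      ⟨reCLM.integrable_comp this.1, reCLM.integrable_comp this.2⟩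
    simpa only [ofReal_re] using h3
  · have := hi.2 x hx
    rw [intervalIntegral.integral_ofReal] at this
    simp only [hG, intervalIntegral.integral_same] at this
    have h4 : (((n + 1).factorial : ℂ))⁻¹ * ((∫ s in (0:ℝ)..x, k s : ℝ) : ℂ) ^ (n + 1) =
      (((∫ s in (0:ℝ)..x, k s) ^ (n + 1) / (n + 1).factorial : ℝ) : ℂ) := by
      push_cast; rw [div_eq_inv_mul]
    rw [h4] at this
    rw [ofReal_zero, zero_pow n.succ_ne_zero, mul_zero, zero_add] at this
    exact (Complex.ofReal_injective this).symm

/-- Termwise integration of a series of continuous functions against a locally integrable weight,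
under the bounds satisfied by Picard iterates. -/
lemma hasSum_integral_series {A : ℝ → ℂ} {w : ℕ → ℝ → ℂ} {G : ℝ → ℝ} {M : ℝ}
    (hA : ∀ b, 0 ≤ b → IntervalIntegrable A volume 0 b)
    (hw : ∀ n, ContinuousOn (w n) (Set.Ici 0)) (hGm : ∀ s t, 0 ≤ s → s ≤ t → G s ≤ G t)
    (hG0 : ∀ t, 0 ≤ t → 0 ≤ G t) (hM : 0 ≤ M)
    (hb : ∀ n t, 0 ≤ t → ‖w n t‖ ≤ M * (G t ^ n / n.factorial)) {x : ℝ} (hx : 0 ≤ x) :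
    HasSum (fun n => ∫ t in (0:ℝ)..x, A t * w n t) (∫ t in (0:ℝ)..x, A t * ∑' n, w n t) := by
  have hs : Summable fun n => M * (G x ^ n / n.factorial) :=
    (Real.summable_pow_div_factorial _).mul_left _
  have hb' : ∀ n t, 0 ≤ t → t ≤ x → ‖w n t‖ ≤ M * (G x ^ n / n.factorial) := by
    intro n t h0 h1
    refine (hb n t h0).trans ?_
    have := hGm t x h0 h1
    have := hG0 t h0
    gcongr
  have hAw : ∀ n, IntervalIntegrable (fun t => A t * w n t) volume 0 x := fun n =>
    (hA x hx).mul_continuousOn ((hw n).mono fun t ht => by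
      rw [Set.uIcc_of_le hx] at ht; exact ht.1)
  refine intervalIntegral.hasSum_integral_of_dominated_convergence
    (fun n t => ‖A t‖ * (M * (G x ^ n / n.factorial))) (fun n => ?_) (fun n => ?_) ?_ ?_ ?_
  · have := (hAw n).1.aestronglyMeasurable
    rwa [← Set.uIoc_of_le hx] at this
  · refine Eventually.of_forall fun t ht => ?_
    rw [Set.uIoc_of_le hx] at ht
    rw [norm_mul]
    gcongr
    exact hb' n t ht.1.le ht.2
  · exact Eventually.of_forall fun t _ => hs.mul_left _
  · simp_rw [tsum_mul_left]
    exact (hA x hx).norm.mul_const _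
  · refine Eventually.of_forall fun t ht => ?_
    rw [Set.uIoc_of_le hx] at ht
    exact (Summable.of_norm_bounded hs fun n => hb' n t ht.1.le ht.2).hasSum.mul_left _

/-- Existence for the initial value problem with a locally integrable coefficient. -/
lemma exists_sol {Q : ℝ → ℂ} (hQ : ∀ b, 0 ≤ b → IntervalIntegrable Q volume 0 b) (c d : ℂ) :
    ∃ y y', IsSol Q 0 y y' ∧ y 0 = c ∧ y' 0 = d := by
  set k : ℝ → ℝ := fun t => 1 + ‖Q t‖ with hkdef
  have hk : ∀ b, 0 ≤ b → IntervalIntegrable k volume 0 b := fun b hb =>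
    intervalIntegrable_const.add (hQ b hb).norm
  set G : ℝ → ℝ := fun t => ∫ s in (0:ℝ)..t, k s with hG
  have hk0 : ∀ t, 0 ≤ k t := fun t => by positivity
  have hG0 : ∀ t, 0 ≤ t → 0 ≤ G t := fun t ht =>
    intervalIntegral.integral_nonneg ht fun s _ => hk0 s
  have hGm : ∀ s t, 0 ≤ s → s ≤ t → G s ≤ G t := fun s t hs hst => by
    have := intervalIntegral.integral_add_adjacent_intervals (hk s hs)
      ((hk s hs).symm.trans (hk t (hs.trans hst)))
    have h2 : 0 ≤ ∫ u in s..t, k u := intervalIntegral.integral_nonneg hst fun s _ => hk0 s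
    simp only [hG]; linarith
  set M : ℝ := ‖c‖ + ‖d‖ with hM
  have hM0 : 0 ≤ M := by positivity
  set u : ℕ → ℝ → ℂ := fun n x => (picardTerm Q c d n x).1 with hu
  set v : ℕ → ℝ → ℂ := fun n x => (picardTerm Q c d n x).2 with hv
  have u0 : ∀ x, u 0 x = c := fun x => rfl
  have v0 : ∀ x, v 0 x = d := fun x => rfl
  have us : ∀ n x, u (n+1) x = ∫ t in (0:ℝ)..x, v n t := fun n x => rfl
  have vs : ∀ n x, v (n+1) x = ∫ t in (0:ℝ)..x, Q t * u n t := fun n x => rfl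
  have key : ∀ n, (ContinuousOn (u n) (Set.Ici 0) ∧ ContinuousOn (v n) (Set.Ici 0)) ∧
      ∀ t, 0 ≤ t → ‖u n t‖ ≤ M * (G t ^ n / n.factorial) ∧
        ‖v n t‖ ≤ M * (G t ^ n / n.factorial) := by
    intro n
    induction n with
    | zero =>
      refine ⟨⟨continuousOn_const, continuousOn_const⟩, fun t _ => ?_⟩
      rw [u0, v0]
      simp [hM]
    | succ n ih =>
      obtain ⟨⟨cu, cv⟩, hb⟩ := ih
      have hsub : ∀ b : ℝ, 0 ≤ b → Set.uIcc 0 b ⊆ Set.Ici (0:ℝ) := fun b hb t ht => by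
        rw [Set.uIcc_of_le hb] at ht; exact ht.1
      have Lu : LocACOn (u (n+1)) (v n) 0 :=
        ⟨fun b hb => (cv.mono (hsub b hb)).intervalIntegrable, fun x _ => by
          rw [us, us, intervalIntegral.integral_same, zero_add]⟩
      have Lv : LocACOn (v (n+1)) (fun t => Q t * u n t) 0 :=
        ⟨fun b hb => (hQ b hb).mul_continuousOn (cu.mono (hsub b hb)), fun x _ => by
          rw [vs, vs, intervalIntegral.integral_same, zero_add]⟩
      refine ⟨⟨Lu.continuousOn, Lv.continuousOn⟩, fun t ht => ?_⟩
      obtain ⟨hi, he⟩ := integral_pow_primitive hk n ht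
      have hIntg : ∫ s in (0:ℝ)..t, M * (k s * (G s ^ n / n.factorial)) =
          M * (G t ^ (n+1) / (n+1).factorial) := by
        rw [intervalIntegral.integral_const_mul, he]
      rw [← hIntg]
      constructor
      · rw [us]
        refine intervalIntegral.norm_integral_le_of_norm_le ht
          (Eventually.of_forall fun s hs => ?_) (hi.const_mul M)
        refine (hb s hs.1.le).2.trans ?_
        have h1 : 0 ≤ G s ^ n / n.factorial := by have := hG0 s hs.1.le; positivity
        have h2 : 1 ≤ k s := by simp [hkdef]
        nlinarith [mul_le_mul_of_nonneg_left (mul_le_mul_of_nonneg_right h2 h1) hM0]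
      · rw [vs]
        refine intervalIntegral.norm_integral_le_of_norm_le ht
          (Eventually.of_forall fun s hs => ?_) (hi.const_mul M)
        rw [norm_mul]
        have h1 : 0 ≤ G s ^ n / n.factorial := by have := hG0 s hs.1.le; positivity
        have h2 : ‖Q s‖ ≤ k s := by simp [hkdef]
        calc ‖Q s‖ * ‖u n s‖ ≤ k s * (M * (G s ^ n / n.factorial)) := by
              gcongr
              exact (hb s hs.1.le).1
          _ = _ := by ring
  have hsub : ∀ b : ℝ, 0 ≤ b → Set.uIcc 0 b ⊆ Set.Icc (0:ℝ) b := fun b hb => by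
    rw [Set.uIcc_of_le hb]
  have hsum : ∀ b, Summable fun n : ℕ => M * (G b ^ n / n.factorial) := fun b =>
    (Real.summable_pow_div_factorial _).mul_left _
  have hbd : ∀ b n t, t ∈ Set.Icc 0 b → M * (G t ^ n / n.factorial) ≤
      M * (G b ^ n / n.factorial) := fun b n t ht => by
    have := hGm t b ht.1 ht.2
    have := hG0 t ht.1
    gcongr
  have cU : ∀ b, ContinuousOn (fun x => ∑' n, u n x) (Set.Icc 0 b) := fun b =>
    continuousOn_tsum (fun n => (key n).1.1.mono fun t ht => ht.1) (hsum b)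
      fun n t ht => ((key n).2 t ht.1).1.trans (hbd b n t ht)
  have cV : ∀ b, ContinuousOn (fun x => ∑' n, v n x) (Set.Icc 0 b) := fun b =>
    continuousOn_tsum (fun n => (key n).1.2.mono fun t ht => ht.1) (hsum b)
      fun n t ht => ((key n).2 t ht.1).2.trans (hbd b n t ht)
  have sU : ∀ x, 0 ≤ x → Summable fun n => u n x := fun x hx =>
    Summable.of_norm_bounded (hsum x) fun n => ((key n).2 x hx).1
  have sV : ∀ x, 0 ≤ x → Summable fun n => v n x := fun x hx =>
    Summable.of_norm_bounded (hsum x) fun n => ((key n).2 x hx).2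
  have eU : ∀ x, 0 ≤ x → ∑' n, u n x = c + ∫ t in (0:ℝ)..x, ∑' n, v n t := by
    intro x hx
    have := hasSum_integral_series (A := fun _ => 1) (fun b _ => intervalIntegrable_const)
      (fun n => (key n).1.2) hGm hG0 hM0 (fun n t ht => ((key n).2 t ht).2) hx
    simp only [one_mul] at this
    rw [(sU x hx).tsum_eq_zero_add, u0, ← this.tsum_eq]
    simp_rw [us]
  have eV : ∀ x, 0 ≤ x → ∑' n, v n x = d + ∫ t in (0:ℝ)..x, Q t * ∑' n, u n t := by
    intro x hx
    have := hasSum_integral_series hQ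
      (fun n => (key n).1.1) hGm hG0 hM0 (fun n t ht => ((key n).2 t ht).1) hx
    rw [(sV x hx).tsum_eq_zero_add, v0, ← this.tsum_eq]
    simp_rw [vs]
  have eU0 : ∑' n, u n 0 = c := by simpa using eU 0 le_rfl
  have eV0 : ∑' n, v n 0 = d := by simpa using eV 0 le_rfl
  refine ⟨fun x => ∑' n, u n x, fun x => ∑' n, v n x, ⟨⟨fun b hb => ?_, fun x hx => ?_⟩,
    ⟨fun b hb => ?_, fun x hx => ?_⟩⟩, eU0, eV0⟩
  · exact ((cV b).mono (hsub b hb)).intervalIntegrable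
  · beta_reduce; rw [eU0, eU x hx]
  · simpa using (hQ b hb).mul_continuousOn ((cU b).mono (hsub b hb))
  · beta_reduce; rw [eV0, eV x hx]; simp

/-! ### Solutions: linear combinations, Wronskians, uniqueness -/

/-- Lebesgue measure on the closed half-line `[0,∞)`. -/
abbrev mu0 : Measure ℝ := volume.restrict (Set.Ici (0:ℝ))

namespace IsSol

lemma add_mul {Q f g y y' z z' : ℝ → ℂ} (hy : IsSol Q f y y') (hz : IsSol Q g z z') (k : ℂ) :
    IsSol Q (fun x => f x + k * g x) (fun x => y x + k * z x) (fun x => y' x + k * z' x) :=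
  ⟨hy.1.add (hz.1.const_mul k), (hy.2.add (hz.2.const_mul k)).congr_ae
    (Eventually.of_forall fun x _ => by ring)⟩

lemma congr_rhs {Q f g y y' : ℝ → ℂ} (hy : IsSol Q f y y')
    (h : ∀ᵐ x : ℝ, 0 ≤ x → f x = g x) : IsSol Q g y y' :=
  ⟨hy.1, hy.2.congr_ae (by filter_upwards [h] with x hx h0; rw [hx h0])⟩

lemma lin {Q y y' z z' : ℝ → ℂ} (hy : IsSol Q 0 y y') (hz : IsSol Q 0 z z') (j k : ℂ) :
    IsSol Q 0 (fun x => j * y x + k * z x) (fun x => j * y' x + k * z' x) :=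
  ⟨(hy.1.const_mul j).add (hz.1.const_mul k), ((hy.2.const_mul j).add (hz.2.const_mul k)).congr_ae
    (Eventually.of_forall fun x _ => by simp only [Pi.zero_apply]; ring)⟩

lemma wronskian {Q f g y y' z z' : ℝ → ℂ} (hy : IsSol Q f y y') (hz : IsSol Q g z z') :
    LocACOn (fun x => y x * z' x - y' x * z x) (fun x => f x * z x - y x * g x) 0 :=
  (((hy.1.mul hz.2).add ((hy.2.mul hz.1).const_mul (-1))).congr_left
    (fun x _ => by ring)).congr_ae (Eventually.of_forall fun x _ => by ring)

lemma wronskian_const {Q y y' z z' : ℝ → ℂ} (hy : IsSol Q 0 y y') (hz : IsSol Q 0 z z')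
    {x : ℝ} (hx : 0 ≤ x) : y x * z' x - y' x * z x = y 0 * z' 0 - y' 0 * z 0 := by
  have := (hy.wronskian hz).2 x hx
  simpa using this

lemma eq_zero {Q y y' : ℝ → ℂ} (hQ : ∀ b, 0 ≤ b → IntervalIntegrable Q volume 0 b)
    (hy : IsSol Q 0 y y') (h0 : y 0 = 0) (h0' : y' 0 = 0) {x : ℝ} (hx : 0 ≤ x) :
    y x = 0 ∧ y' x = 0 := by
  obtain ⟨u, u', hu, u0, u0'⟩ := exists_sol hQ 1 0
  obtain ⟨v, v', hv, v0, v0'⟩ := exists_sol hQ 0 1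
  have e1 := hy.wronskian_const hu hx
  have e2 := hy.wronskian_const hv hx
  have e3 := hu.wronskian_const hv hx
  rw [h0, h0'] at e1 e2
  rw [u0, u0', v0, v0'] at e3
  constructor
  · linear_combination (-(y x)) * e3 + u x * e2 - v x * e1
  · linear_combination (-(y' x)) * e3 + u' x * e2 - v' x * e1

lemma proportional {Q y y' z z' : ℝ → ℂ} (hQ : ∀ b, 0 ≤ b → IntervalIntegrable Q volume 0 b)
    (hy : IsSol Q 0 y y') (hz : IsSol Q 0 z z') (hz0 : z 0 ≠ 0 ∨ z' 0 ≠ 0)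
    (hW : y 0 * z' 0 - y' 0 * z 0 = 0) :
    ∃ k : ℂ, ∀ x, 0 ≤ x → y x = k * z x ∧ y' x = k * z' x := by
  obtain ⟨k, h1, h2⟩ : ∃ k : ℂ, y 0 = k * z 0 ∧ y' 0 = k * z' 0 := by
    rcases hz0 with h | h
    · refine ⟨y 0 / z 0, by field_simp, ?_⟩
      field_simp; linear_combination -hW
    · refine ⟨y' 0 / z' 0, ?_, by field_simp⟩
      field_simp; linear_combination hW
  refine ⟨k, fun x hx => ?_⟩
  have := (hy.lin hz 1 (-k)).eq_zero hQ (by rw [h1]; ring) (by rw [h2]; ring) hx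
  exact ⟨by linear_combination this.1, by linear_combination this.2⟩

end IsSol

/-! ### Square integrability on the half-line -/

lemma ici_mono {b : ℝ} (a : ℝ) (h : a ≤ b) : Set.Ici b ⊆ Set.Ici a := Set.Ici_subset_Ici.2 h

lemma memLp_of_bound {g : ℝ → ℂ} {x₁ K : ℝ} (hx₁ : 0 ≤ x₁) (hg : ContinuousOn g (Set.Ici 0))
    (h : ∀ X, x₁ ≤ X → ∫ t in x₁..X, ‖g t‖ ^ 2 ≤ K) : MemLp g 2 mu0 := by
  rw [memLp_two_iff_integrable_sq_norm (hg.aestronglyMeasurable measurableSet_Ici)]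
  have hc : ContinuousOn (fun t => ‖g t‖ ^ 2) (Set.Ici 0) := hg.norm.pow 2
  have h1 : IntegrableOn (fun t => ‖g t‖ ^ 2) (Set.Icc 0 x₁) :=
    (hc.mono fun t ht => ht.1).integrableOn_Icc
  have h2 : IntegrableOn (fun t => ‖g t‖ ^ 2) (Set.Ioi x₁) := by
    refine integrableOn_Ioi_of_intervalIntegral_norm_bounded (b := id) (l := atTop) K x₁
      (fun X => ?_) tendsto_id ?_
    · exact ((hc.mono fun t ht => hx₁.trans ht.1).integrableOn_Icc (b := X)).mono_set
        Set.Ioc_subset_Icc_self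
    · filter_upwards [eventually_ge_atTop x₁] with X hX
      simpa using h X hX
  have := h1.union h2
  rwa [Set.Icc_union_Ioi_eq_Ici hx₁] at this

/-- Cauchy–Schwarz. -/
lemma norm_integral_mul_sq_le {α : Type*} [MeasurableSpace α] {μ : Measure α} {f g : α → ℂ}
    (hf : MemLp f 2 μ) (hg : MemLp g 2 μ) :
    ‖∫ t, f t * g t ∂μ‖ ^ 2 ≤ (∫ t, ‖f t‖ ^ 2 ∂μ) * ∫ t, ‖g t‖ ^ 2 ∂μ := by
  have h := integral_mul_norm_le_Lp_mul_Lq (μ := μ) (f := f) (g := g) (p := 2) (q := 2)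
    ⟨by norm_num, by norm_num, by norm_num⟩ (by simpa using hf) (by simpa using hg)
  have h1 : ‖∫ t, f t * g t ∂μ‖ ≤ ∫ t, ‖f t‖ * ‖g t‖ ∂μ := by
    refine (norm_integral_le_integral_norm _).trans (le_of_eq ?_)
    simp_rw [norm_mul]
  have h2 := h1.trans h
  have hA : 0 ≤ ∫ t, ‖f t‖ ^ 2 ∂μ := integral_nonneg fun _ => by positivity
  have hB : 0 ≤ ∫ t, ‖g t‖ ^ 2 ∂μ := integral_nonneg fun _ => by positivity
  simp only [Real.rpow_two, ← Real.sqrt_eq_rpow] at h2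
  calc _ ≤ (√(∫ t, ‖f t‖ ^ 2 ∂μ) * √(∫ t, ‖g t‖ ^ 2 ∂μ)) ^ 2 := by gcongr
    _ = _ := by rw [mul_pow, Real.sq_sqrt hA, Real.sq_sqrt hB]

lemma memLp_ii {f g : ℝ → ℂ} (hf : MemLp f 2 mu0) (hg : MemLp g 2 mu0) {a b : ℝ} (ha : 0 ≤ a)
    (hab : a ≤ b) : IntervalIntegrable (fun t => f t * g t) volume a b := by
  rw [intervalIntegrable_iff_integrableOn_Ioc_of_le hab]
  exact IntegrableOn.mono_set (t := Set.Ici 0) (hf.integrable_mul hg)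
    fun t ht => (ha.trans ht.1.le : 0 ≤ t)

/-- If two solutions have nonzero Wronskian `w`, then `(φψ)' = 2φψ' - w`, so `φψ` grows linearly
as soon as `φ ψ'` is integrable; this is incompatible with `φψ` being integrable. -/
lemma wronskian_eq_zero {Q φ φ' ψ ψ' : ℝ → ℂ} (hφ : IsSol Q 0 φ φ') (hψ : IsSol Q 0 ψ ψ')
    (lφ : MemLp φ 2 mu0) (lψ : MemLp ψ 2 mu0) (lψ' : MemLp ψ' 2 mu0) :
    φ 0 * ψ' 0 - φ' 0 * ψ 0 = 0 := by
  by_contra hw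
  set w := φ 0 * ψ' 0 - φ' 0 * ψ 0 with hwdef
  have hP : LocACOn (fun x => φ x * ψ x) (fun x => 2 * (φ x * ψ' x) - w) 0 :=
    (hφ.1.mul hψ.1).congr_ae (Eventually.of_forall fun x hx => by
      have := hφ.wronskian_const hψ hx
      rw [← hwdef] at this
      linear_combination (-1) * this)
  set I := ∫ t in Set.Ici (0:ℝ), ‖φ t * ψ' t‖
  have hIntg : Integrable (fun t => φ t * ψ' t) mu0 := lφ.integrable_mul lψ'
  have hI : ∀ X, 0 ≤ X → ‖∫ t in (0:ℝ)..X, φ t * ψ' t‖ ≤ I := by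
    intro X hX
    rw [intervalIntegral.integral_of_le hX]
    refine (norm_integral_le_integral_norm _).trans ?_
    exact setIntegral_mono_set hIntg.norm (Eventually.of_forall fun _ => norm_nonneg _)
      (Eventually.of_forall fun t ht => le_of_lt ht.1)
  have hbig : ∀ X, 0 ≤ X → ‖w‖ * X - ‖φ 0 * ψ 0‖ - 2 * I ≤ ‖φ X * ψ X‖ := by
    intro X hX
    have h1 := hP.2 X hX
    beta_reduce at h1
    rw [intervalIntegral.integral_sub ((memLp_ii lφ lψ' le_rfl hX).const_mul 2)
      intervalIntegrable_const, intervalIntegral.integral_const_mul,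
      intervalIntegral.integral_const, sub_zero] at h1
    have h2 : X • w = φ 0 * ψ 0 + 2 * (∫ t in (0:ℝ)..X, φ t * ψ' t) - φ X * ψ X := by
      rw [h1]; ring
    have h3 : ‖w‖ * X = ‖X • w‖ := by rw [norm_smul, Real.norm_of_nonneg hX, mul_comm]
    have h4 : ‖(2:ℂ) * (∫ t in (0:ℝ)..X, φ t * ψ' t)‖ ≤ 2 * I := by
      rw [norm_mul]; simpa using hI X hX
    have h5 := norm_sub_le (φ 0 * ψ 0 + 2 * (∫ t in (0:ℝ)..X, φ t * ψ' t)) (φ X * ψ X)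
    have h6 := norm_add_le (φ 0 * ψ 0) (2 * (∫ t in (0:ℝ)..X, φ t * ψ' t))
    rw [← h2, ← h3] at h5
    linarith
  have hw0 : 0 < ‖w‖ := norm_pos_iff.2 hw
  set X₀ := max 0 ((1 + ‖φ 0 * ψ 0‖ + 2 * I) / ‖w‖) with hX₀
  have hone : IntegrableOn (fun _ : ℝ => (1:ℝ)) (Set.Ici X₀) := by
    have h1 : IntegrableOn (fun t => φ t * ψ t) (Set.Ici X₀) :=
      IntegrableOn.mono_set (t := Set.Ici 0) (lφ.integrable_mul lψ) (ici_mono 0 (le_max_left _ _))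
    refine Integrable.mono h1 aestronglyMeasurable_const ?_
    refine (ae_restrict_iff' measurableSet_Ici).2 (Eventually.of_forall fun X hX => ?_)
    have hX' : X₀ ≤ X := hX
    have h2 : (1 + ‖φ 0 * ψ 0‖ + 2 * I) / ‖w‖ ≤ X := (le_max_right _ _).trans hX'
    rw [div_le_iff₀ hw0] at h2
    have := hbig X ((le_max_left _ _).trans hX')
    rw [norm_one]
    linarith
  rw [integrableOn_const_iff] at hone
  simp at hone

/-! ### The square root of the potential and coercivity -/

lemma CondA.slit {q q' : ℝ → ℂ} {x₀ C : ℝ} (hA : CondA q q' x₀ C) {x : ℝ} (hx : x₀ ≤ x) :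
    q x ∈ slitPlane := by
  obtain ⟨κ, hκ, h⟩ := hA.2.2.1
  obtain ⟨h1, h2, h3⟩ := h x hx
  rw [mem_slitPlane_iff_arg]
  exact ⟨by intro h4; linarith, h1⟩

lemma sqrtQ_sq (q : ℝ → ℂ) (x : ℝ) : sqrtQ q x * sqrtQ q x = q x := by
  have := Complex.cpow_nat_inv_pow (q x) (n := 2) (by norm_num)
  rwa [Nat.cast_ofNat, ← one_div, sq] at this

lemma CondA.hasDerivAt {q q' : ℝ → ℂ} {x₀ C : ℝ} (hA : CondA q q' x₀ C) {x : ℝ} (hx : x₀ ≤ x)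
    (h : HasDerivAt q (q' x) x) : HasDerivAt (sqrtQ q) (sqrtQD q q' x) x := by
  have hq := hA.slit hx
  have hp : sqrtQ q x ≠ 0 := fun h0 => slitPlane_ne_zero hq (by rw [← sqrtQ_sq q, h0, mul_zero])
  have h1 := (Complex.hasStrictDerivAt_cpow_const (c := (1:ℂ) / 2) hq).hasDerivAt.scomp x h
  have h2 : q' x • ((1:ℂ) / 2 * q x ^ ((1:ℂ) / 2 - 1)) = sqrtQD q q' x := by
    rw [cpow_sub _ _ (slitPlane_ne_zero hq), cpow_one, smul_eq_mul, sqrtQD,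
      show q x ^ ((1:ℂ) / 2) = sqrtQ q x from rfl]
    rw [← sqrtQ_sq q x]
    field_simp
  rw [h2] at h1
  exact h1

lemma CondA.continuousOn {q q' : ℝ → ℂ} {x₀ C : ℝ} (hA : CondA q q' x₀ C) :
    ContinuousOn (sqrtQ q) (Set.Ici x₀) :=
  hA.2.1.continuousOn.cpow continuousOn_const fun _ hx => hA.slit hx

lemma CondA.le_re {q q' : ℝ → ℂ} {x₀ C : ℝ} (hA : CondA q q' x₀ C) {x : ℝ} (hx : x₀ ≤ x) :
    C ≤ (sqrtQ q x).re := by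
  by_contra! hlt
  have h1 : ContinuousWithinAt (fun x => (sqrtQ q x).re) (Set.Ioi x) x :=
    (continuous_re.comp_continuousOn hA.continuousOn x hx).mono
      fun y hy => hx.trans (le_of_lt hy)
  have h2 := h1.eventually (gt_mem_nhds hlt)
  obtain ⟨u, hu, hsub⟩ := mem_nhdsGT_iff_exists_Ioo_subset.1 h2
  have h3 : volume (Set.Ioo x u) = 0 := by
    refine measure_mono_null (fun y hy => ?_) (ae_iff.1 hA.2.2.2.2.2)
    simp only [Set.mem_ofPred_eq, not_forall, not_le]
    refine ⟨hx.trans hy.1.le, lt_of_lt_of_le (hsub hy) ?_⟩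
    have : 0 ≤ ‖sqrtQD q q' y / sqrtQ q y‖ := norm_nonneg _
    linarith
  rw [Real.volume_Ioo, ENNReal.ofReal_eq_zero] at h3
  have : x < u := hu
  linarith

lemma CondA.locAC {q q' : ℝ → ℂ} {x₀ C : ℝ} (hA : CondA q q' x₀ C) :
    LocACOn (sqrtQ q) (sqrtQD q q') x₀ := by
  have hC : 0 < C := hA.2.2.2.2.1
  have hne : ∀ x, x₀ ≤ x → sqrtQ q x ≠ 0 := fun x hx h0 => by
    have := hA.le_re hx
    rw [h0, zero_re] at this; linarith
  refine LocACOn.of_ac (fun b hb => ?_) ?_ fun b hb => ?_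
  · have h1 := hA.2.1.ac hb
    rw [absolutelyContinuousOnInterval_iff] at h1 ⊢
    intro ε hε
    obtain ⟨δ, hδ, H⟩ := h1 (2 * C * ε) (by positivity)
    refine ⟨δ, hδ, fun E hE hl => ?_⟩
    have key := H E hE hl
    have h2 : ∀ i ∈ Finset.range E.1, 2 * C * dist (sqrtQ q (E.2 i).1) (sqrtQ q (E.2 i).2) ≤
        dist (q (E.2 i).1) (q (E.2 i).2) := by
      intro i hi
      have hmem := hE.1 i hi
      rw [Set.uIcc_of_le hb] at hmem
      have h3 := hA.le_re hmem.1.1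
      have h4 := hA.le_re hmem.2.1
      rw [dist_eq_norm, dist_eq_norm, ← sqrtQ_sq q, ← sqrtQ_sq q (E.2 i).2]
      set s := sqrtQ q (E.2 i).1
      set t := sqrtQ q (E.2 i).2
      rw [show s * s - t * t = (s + t) * (s - t) by ring, norm_mul]
      gcongr
      have := re_le_norm (s + t)
      rw [add_re] at this
      linarith
    have h5 := Finset.sum_le_sum h2
    rw [← Finset.mul_sum] at h5
    have h6 := h5.trans_lt key
    exact lt_of_mul_lt_mul_left h6 (by positivity)
  · filter_upwards [hA.2.1.ae_hasDerivAt] with x h hx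
    exact hA.hasDerivAt hx.le (h hx)
  · have : ContinuousOn (fun x => (2 * sqrtQ q x)⁻¹) (Set.uIcc x₀ b) := by
      refine ((continuousOn_const.mul hA.continuousOn).inv₀ fun x hx => ?_).mono ?_
      · exact mul_ne_zero two_ne_zero (hne x hx)
      · rw [Set.uIcc_of_le hb]; exact fun _ h => h.1
    exact ((hA.2.1.1 b hb).mul_continuousOn this).congr fun x _ => by
      simp [sqrtQD, div_eq_mul_inv]

lemma CondA.ii {q q' : ℝ → ℂ} {x₀ C : ℝ} (hA : CondA q q' x₀ C) (lam : ℂ) (b : ℝ) (hb : 0 ≤ b) :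
    IntervalIntegrable (fun x => q x - lam) volume 0 b := by
  refine IntervalIntegrable.sub ?_ intervalIntegrable_const
  rw [intervalIntegrable_iff_integrableOn_Icc_of_le hb]
  exact hA.1.integrableOn_compact_subset Set.Icc_subset_Ici_self isCompact_Icc

/-- The multiplier `p` is coercive for the potential `Q` on `[x₁,∞)`: the quadratic form obtained
by differentiating `Re (y' * conj p * conj y)` along solutions of `-y'' + Q y = 0` (with
`a = y x`, `b = y' x`) dominates `c (|b|² + |p a|²)`. -/
structure Coer (Q p p' : ℝ → ℂ) (x₁ c : ℝ) : Prop where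
  hx : 0 ≤ x₁
  hc : 0 < c
  ac : LocACOn p p' x₁
  le : ∀ x, x₁ ≤ x → c ≤ ‖p x‖
  form : ∀ᵐ x : ℝ, x₁ ≤ x → ∀ a b : ℂ, c * (‖b‖ ^ 2 + ‖p x‖ ^ 2 * ‖a‖ ^ 2) ≤
    (starRingEnd ℂ (p x) * (‖b‖ ^ 2 : ℝ) + Q x * starRingEnd ℂ (p x) * (‖a‖ ^ 2 : ℝ)
      + b * starRingEnd ℂ (p' x) * starRingEnd ℂ a).re

lemma CondA.coer {q q' : ℝ → ℂ} {x₀ C : ℝ} (hx₀ : 0 ≤ x₀) (hA : CondA q q' x₀ C) {lam : ℂ}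
    {x₁ c : ℝ} (hx₁ : x₀ ≤ x₁) (hc : 0 < c) (hcC : c ≤ C)
    (h : ∀ x, x₁ ≤ x → (lam * starRingEnd ℂ (sqrtQ q x)).re ≤ (C - c) * ‖sqrtQ q x‖ ^ 2) :
    Coer (fun x => q x - lam) (sqrtQ q) (sqrtQD q q') x₁ c := by
  refine ⟨hx₀.trans hx₁, hc, hA.locAC.mono hx₁, fun x hx => ?_, ?_⟩
  · exact hcC.trans ((hA.le_re (hx₁.trans hx)).trans (re_le_norm _))
  · filter_upwards [hA.2.2.2.2.2] with x hx hx1 a b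
    have h1 := hx (hx₁.trans hx1)
    have h2 := h x hx1
    have hp : 0 < ‖sqrtQ q x‖ := hc.trans_le (hcC.trans
      ((hA.le_re (hx₁.trans hx1)).trans (re_le_norm _)))
    rw [← sqrtQ_sq q x]
    set P := sqrtQ q x
    set D := sqrtQD q q' x
    set r := ‖D / P‖ with hr
    have h3 : ‖b * starRingEnd ℂ D * starRingEnd ℂ a‖ = r * (‖b‖ * (‖P‖ * ‖a‖)) := by
      rw [norm_mul, norm_mul, norm_conj, norm_conj, hr, norm_div]
      field_simp
    have h4 : -(r * (‖b‖ * (‖P‖ * ‖a‖))) ≤ (b * starRingEnd ℂ D * starRingEnd ℂ a).re := by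
      rw [← h3]; exact (abs_le.1 (abs_re_le_norm _)).1
    have h5 : (P * P - lam) * starRingEnd ℂ P = (‖P‖ ^ 2 : ℝ) * P - lam * starRingEnd ℂ P := by
      rw [← normSq_eq_norm_sq, ← mul_conj P]; ring
    have hr0 : 0 ≤ r := norm_nonneg _
    have h6 : r * (‖b‖ * (‖P‖ * ‖a‖)) ≤ r * ((‖b‖ ^ 2 + ‖P‖ ^ 2 * ‖a‖ ^ 2) / 2) := by
      gcongr
      nlinarith [sq_nonneg (‖b‖ - ‖P‖ * ‖a‖)]
    have h7 : (starRingEnd ℂ P * (‖b‖ ^ 2 : ℝ)).re = P.re * ‖b‖ ^ 2 := by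
      rw [re_mul_ofReal, conj_re]
    have h8 : ((P * P - lam) * starRingEnd ℂ P * (‖a‖ ^ 2 : ℝ)).re =
        (‖P‖ ^ 2 * P.re - (lam * starRingEnd ℂ P).re) * ‖a‖ ^ 2 := by
      rw [re_mul_ofReal, h5, sub_re, re_ofReal_mul]
    rw [add_re, add_re, h7, h8]
    have h9 := mul_le_mul_of_nonneg_right h2 (sq_nonneg ‖a‖)
    have h10 := mul_le_mul_of_nonneg_right h1
      (by positivity : 0 ≤ ‖b‖ ^ 2 + ‖P‖ ^ 2 * ‖a‖ ^ 2)
    have h11 := mul_le_mul_of_nonneg_right hcC (sq_nonneg ‖b‖)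
    nlinarith

/-! ### The energy inequality -/

/-- The sesquilinear energy `y' * conj p * conj y`, whose real part is monotone along solutions. -/
def en (p y y' : ℝ → ℂ) (x : ℝ) : ℂ :=
  y' x * (starRingEnd ℂ (p x) * starRingEnd ℂ (y x))

/-- The energy density `|y'|² + |p y|²`. -/
def dens (p y y' : ℝ → ℂ) (x : ℝ) : ℝ := ‖y' x‖ ^ 2 + ‖p x‖ ^ 2 * ‖y x‖ ^ 2

lemma dens_nonneg (p y y' : ℝ → ℂ) (x : ℝ) : 0 ≤ dens p y y' x := by
  unfold dens; positivity

namespace Coer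

lemma dens_cont {Q p p' f y y' : ℝ → ℂ} {x₁ c : ℝ} (hC : Coer Q p p' x₁ c)
    (hy : IsSol Q f y y') : ContinuousOn (dens p y y') (Set.Ici x₁) :=
  (((hy.2.mono hC.hx).continuousOn.norm.pow 2)).add
    ((hC.ac.continuousOn.norm.pow 2).mul ((hy.1.mono hC.hx).continuousOn.norm.pow 2))

lemma dens_ii {Q p p' f y y' : ℝ → ℂ} {x₁ c : ℝ} (hC : Coer Q p p' x₁ c)
    (hy : IsSol Q f y y') {s X : ℝ} (hs : x₁ ≤ s) (hX : s ≤ X) :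
    IntervalIntegrable (dens p y y') volume s X :=
  ContinuousOn.intervalIntegrable ((hC.dens_cont hy).mono fun t ht => by
    rw [Set.uIcc_of_le hX] at ht
    exact hs.trans ht.1)

/-- Along a solution of `-y'' + Q y = f`, the real part of the energy increases at least by
`c/2` times the integrated density, up to the contribution of `f`. -/
lemma energy {Q p p' f y y' : ℝ → ℂ} {x₁ c : ℝ} (hC : Coer Q p p' x₁ c)
    (hy : IsSol Q f y y') {s X : ℝ} (hs : x₁ ≤ s) (hX : s ≤ X)
    (hf : IntervalIntegrable (fun t => ‖f t‖ ^ 2) volume s X) :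
    (en p y y' s).re + c / 2 * ∫ t in s..X, dens p y y' t ≤
      (en p y y' X).re + 1 / (2 * c) * ∫ t in s..X, ‖f t‖ ^ 2 := by
  have hc := hC.hc
  have h1 : LocACOn (en p y y') _ x₁ :=
    (hy.2.mono hC.hx).mul (hC.ac.conj.mul (hy.1.mono hC.hx).conj)
  have hd := hC.dens_ii hy hs hX
  have h2 := h1.re_le hs hX (g := fun t => c / 2 * dens p y y' t - 1 / (2 * c) * ‖f t‖ ^ 2)
    ((hd.const_mul _).sub (hf.const_mul _)) (by
      filter_upwards [hC.form] with x hx hx1 _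
      have h3 := hx hx1 (y x) (y' x)
      unfold dens
      set P := p x
      set a := y x
      set b := y' x
      have h4 : ‖f x * (starRingEnd ℂ P * starRingEnd ℂ a)‖ = ‖f x‖ * (‖P‖ * ‖a‖) := by
        rw [norm_mul, norm_mul, norm_conj, norm_conj]
      have h5 := re_le_norm (f x * (starRingEnd ℂ P * starRingEnd ℂ a))
      rw [h4] at h5
      have h6 : ‖f x‖ * (‖P‖ * ‖a‖) ≤ 1 / (2 * c) * ‖f x‖ ^ 2 + c / 2 * (‖P‖ ^ 2 * ‖a‖ ^ 2) := by
        have : 1 / (2 * c) * ‖f x‖ ^ 2 + c / 2 * (‖P‖ ^ 2 * ‖a‖ ^ 2) - ‖f x‖ * (‖P‖ * ‖a‖) =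
          1 / (2 * c) * (‖f x‖ - c * (‖P‖ * ‖a‖)) ^ 2 := by field_simp; ring
        have h7 : 0 ≤ 1 / (2 * c) * (‖f x‖ - c * (‖P‖ * ‖a‖)) ^ 2 := by positivity
        linarith
      have h8 : ((Q x * a - f x) * (starRingEnd ℂ P * starRingEnd ℂ a) +
          b * (starRingEnd ℂ (p' x) * starRingEnd ℂ a + starRingEnd ℂ P * starRingEnd ℂ b)) =
          (starRingEnd ℂ P * (‖b‖ ^ 2 : ℝ) + Q x * starRingEnd ℂ P * (‖a‖ ^ 2 : ℝ)
            + b * starRingEnd ℂ (p' x) * starRingEnd ℂ a) -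
          f x * (starRingEnd ℂ P * starRingEnd ℂ a) := by
        rw [← normSq_eq_norm_sq, ← mul_conj b, ← normSq_eq_norm_sq, ← mul_conj a]; ring
      rw [h8, sub_re]
      have : 0 ≤ c * ‖b‖ ^ 2 := by positivity
      linarith)
  rw [intervalIntegral.integral_sub (hd.const_mul _) (hf.const_mul _),
    intervalIntegral.integral_const_mul, intervalIntegral.integral_const_mul] at h2
  linarith

lemma energy0 {Q p p' y y' : ℝ → ℂ} {x₁ c : ℝ} (hC : Coer Q p p' x₁ c)
    (hy : IsSol Q 0 y y') {s X : ℝ} (hs : x₁ ≤ s) (hX : s ≤ X) :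
    (en p y y' s).re + c / 2 * ∫ t in s..X, dens p y y' t ≤ (en p y y' X).re := by
  have := hC.energy hy hs hX (by simp)
  simpa using this

/-- The density controls the square of the modulus, since `|p| ≥ c`. -/
lemma sq_le_dens {Q p p' f y y' : ℝ → ℂ} {x₁ c : ℝ} (hC : Coer Q p p' x₁ c)
    (hy : IsSol Q f y y') {s X : ℝ} (hs : x₁ ≤ s) (hX : s ≤ X) :
    ∫ t in s..X, ‖y t‖ ^ 2 ≤ 1 / c ^ 2 * ∫ t in s..X, dens p y y' t := by
  have hc := hC.hc
  rw [← intervalIntegral.integral_const_mul]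
  refine intervalIntegral.integral_mono_on hX ?_ ((hC.dens_ii hy hs hX).const_mul _) fun t ht => ?_
  · exact ContinuousOn.intervalIntegrable ((hy.1.continuousOn.norm.pow 2).mono fun t ht => by
      rw [Set.uIcc_of_le hX] at ht
      exact hC.hx.trans (hs.trans ht.1))
  · have h1 := hC.le t (hs.trans ht.1)
    have h2 : c ^ 2 * ‖y t‖ ^ 2 ≤ ‖p t‖ ^ 2 * ‖y t‖ ^ 2 := by gcongr
    rw [one_div, ← div_eq_inv_mul, le_div_iff₀ (by positivity)]
    unfold dens
    nlinarith [sq_nonneg ‖y' t‖]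

lemma sq_le_dens' {Q p p' f y y' : ℝ → ℂ} {x₁ c : ℝ} (hC : Coer Q p p' x₁ c)
    (hy : IsSol Q f y y') {s X : ℝ} (hs : x₁ ≤ s) (hX : s ≤ X) :
    ∫ t in s..X, ‖y' t‖ ^ 2 ≤ ∫ t in s..X, dens p y y' t := by
  refine intervalIntegral.integral_mono_on hX ?_ (hC.dens_ii hy hs hX) fun t ht => ?_
  · exact ContinuousOn.intervalIntegrable ((hy.2.continuousOn.norm.pow 2).mono fun t ht => by
      rw [Set.uIcc_of_le hX] at ht
      exact hC.hx.trans (hs.trans ht.1))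
  · unfold dens
    have : 0 ≤ ‖p t‖ ^ 2 * ‖y t‖ ^ 2 := by positivity
    linarith

/-- A nontrivial solution whose energy stays nonpositive exists: requiring the energy to be
nonpositive at `X` cuts out nested nonempty compact sets of initial data. Such a solution and its
derivative are square integrable. -/
lemma exists_decaying {Q p p' : ℝ → ℂ} {x₁ c : ℝ} (hC : Coer Q p p' x₁ c)
    (hQ : ∀ b, 0 ≤ b → IntervalIntegrable Q volume 0 b) :
    ∃ ψ ψ', IsSol Q 0 ψ ψ' ∧ (ψ 0 ≠ 0 ∨ ψ' 0 ≠ 0) ∧ MemLp ψ 2 mu0 ∧ MemLp ψ' 2 mu0 ∧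
      ∀ X, x₁ ≤ X → (en p ψ ψ' X).re ≤ 0 := by
  obtain ⟨u, u', hu, u0, u0'⟩ := exists_sol hQ 1 0
  obtain ⟨v, v', hv, v0, v0'⟩ := exists_sol hQ 0 1
  set Y : ℂ × ℂ → ℝ → ℂ := fun w x => w.1 * u x + w.2 * v x with hY
  set Y' : ℂ × ℂ → ℝ → ℂ := fun w x => w.1 * u' x + w.2 * v' x with hY'
  have hS : ∀ w, IsSol Q 0 (Y w) (Y' w) := fun w => hu.lin hv w.1 w.2
  set K : ℕ → Set (ℂ × ℂ) := fun n =>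
    {w | w ∈ Metric.sphere (0 : ℂ × ℂ) 1 ∧ (en p (Y w) (Y' w) (x₁ + n)).re ≤ 0} with hK
  have hcl : ∀ n : ℕ, IsClosed {w : ℂ × ℂ | (en p (Y w) (Y' w) (x₁ + n)).re ≤ 0} := by
    intro n
    refine isClosed_le ?_ continuous_const
    simp only [en, hY, hY']
    fun_prop
  have hKc : ∀ n, IsClosed (K n) := fun n => Metric.isClosed_sphere.inter (hcl n)
  have hmono : ∀ w s X, x₁ ≤ s → s ≤ X → (en p (Y w) (Y' w) s).re ≤ (en p (Y w) (Y' w) X).re := by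
    intro w s X hs hX
    have h1 := hC.energy0 (hS w) hs hX
    have h2 : 0 ≤ ∫ t in s..X, dens p (Y w) (Y' w) t :=
      intervalIntegral.integral_nonneg hX fun t _ => dens_nonneg _ _ _ _
    have := mul_nonneg hC.hc.le h2
    linarith
  have hne : ∀ n, (K n).Nonempty := by
    intro n
    set X := x₁ + n
    have hX0 : 0 ≤ X := add_nonneg hC.hx (Nat.cast_nonneg n)
    have hw := hu.wronskian_const hv hX0
    rw [u0, u0', v0, v0'] at hw
    have hne : ((v X, -u X) : ℂ × ℂ) ≠ 0 := by
      intro h0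
      rw [Prod.mk_eq_zero, neg_eq_zero] at h0
      rw [h0.1, h0.2] at hw
      simp at hw
    have hn : ‖((v X, -u X) : ℂ × ℂ)‖ ≠ 0 := norm_ne_zero_iff.2 hne
    refine ⟨((‖((v X, -u X) : ℂ × ℂ)‖⁻¹ : ℝ) : ℂ) • ((v X, -u X) : ℂ × ℂ), ?_, ?_⟩
    · rw [mem_sphere_zero_iff_norm, norm_smul, norm_real, norm_inv, norm_norm,
        inv_mul_cancel₀ hn]
    · have : Y (((‖((v X, -u X) : ℂ × ℂ)‖⁻¹ : ℝ) : ℂ) • ((v X, -u X) : ℂ × ℂ)) X = 0 := by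
        simp only [hY, Prod.smul_mk, smul_eq_mul]; ring
      change (en p _ _ X).re ≤ 0
      rw [en, this, map_zero, mul_zero, mul_zero, zero_re]
  obtain ⟨w, hw⟩ := IsCompact.nonempty_iInter_of_sequence_nonempty_isCompact_isClosed K
    (fun n w hw => ⟨hw.1, (hmono w _ _ (by simp) (by push_cast; linarith)).trans hw.2⟩) hne
    ((isCompact_sphere (0 : ℂ × ℂ) 1).inter_right (hcl 0)) hKc
  rw [Set.mem_iInter] at hw
  have hneg : ∀ X, x₁ ≤ X → (en p (Y w) (Y' w) X).re ≤ 0 := by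
    intro X hX
    obtain ⟨n, hn⟩ := exists_nat_ge (X - x₁)
    exact (hmono w X (x₁ + n) hX (by linarith)).trans (hw n).2
  have hbd : ∀ X, x₁ ≤ X → ∫ t in x₁..X, dens p (Y w) (Y' w) t ≤
      2 / c * (-(en p (Y w) (Y' w) x₁).re) := by
    intro X hX
    have h1 := hC.energy0 (hS w) le_rfl hX
    have h2 := hneg X hX
    have hc := hC.hc
    rw [div_mul_eq_mul_div, le_div_iff₀ hc]
    linarith
  refine ⟨Y w, Y' w, hS w, ?_, ?_, ?_, hneg⟩
  · by_contra! h0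
    simp only [hY, hY', u0, u0', v0, v0', mul_zero, mul_one, add_zero, zero_add] at h0
    have h1 := (hw 0).1
    rw [show w = 0 from Prod.ext h0.1 h0.2] at h1
    simp at h1
  · refine memLp_of_bound hC.hx (hS w).1.continuousOn
      (K := 1 / c ^ 2 * (2 / c * (-(en p (Y w) (Y' w) x₁).re))) fun X hX => ?_
    refine (hC.sq_le_dens (hS w) le_rfl hX).trans ?_
    have := hbd X hX
    have hc := hC.hc
    gcongr
  · exact memLp_of_bound hC.hx (hS w).2.continuousOn
      fun X hX => (hC.sq_le_dens' (hS w) le_rfl hX).trans (hbd X hX)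

end Coer

/-! ### The resolvent kernel -/

/-- The Green's function applied to `f`: variation of constants with the solutions `φ`, `ψ`,
where the constant in front of `φ` is chosen so that the result is small at infinity.
With `φ'`, `ψ'` in place of the outer factors this also represents the derivative. -/
def green (φ ψ u v f : ℝ → ℂ) (x : ℝ) : ℂ :=
  v x * (∫ t in (0:ℝ)..x, φ t * f t) +
    u x * ((∫ t, ψ t * f t ∂mu0) - ∫ t in (0:ℝ)..x, ψ t * f t)

lemma green_congr {φ ψ u v f g : ℝ → ℂ} (h : f =ᵐ[mu0] g) {x : ℝ} (hx : 0 ≤ x) :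
    green φ ψ u v f x = green φ ψ u v g x := by
  have h' : ∀ᵐ t : ℝ, 0 ≤ t → f t = g t := (ae_restrict_iff' measurableSet_Ici).1 h
  have h1 : ∀ θ : ℝ → ℂ, ∫ t in (0:ℝ)..x, θ t * f t = ∫ t in (0:ℝ)..x, θ t * g t := fun θ => by
    refine intervalIntegral.integral_congr_ae ?_
    filter_upwards [h'] with t ht htm
    rw [Set.uIoc_of_le hx] at htm
    rw [ht htm.1.le]
  have h2 : ∫ t, ψ t * f t ∂mu0 = ∫ t, ψ t * g t ∂mu0 :=
    integral_congr_ae (by filter_upwards [h] with t ht; rw [ht])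
  rw [green, green, h1, h1, h2]

lemma contOn_ii {φ f : ℝ → ℂ} (hφ : ContinuousOn φ (Set.Ici 0)) (hf : MemLp f 2 mu0) {a b : ℝ}
    (ha : 0 ≤ a) (hab : a ≤ b) : IntervalIntegrable (fun t => φ t * f t) volume a b := by
  have h1 : IntervalIntegrable f volume a b := by
    rw [intervalIntegrable_iff_integrableOn_Ioc_of_le hab]
    have hsub : Set.Ioc a b ⊆ Set.Ici 0 := fun t ht => ha.trans ht.1.le
    have h2 : MemLp f 2 (volume.restrict (Set.Ioc a b)) :=
      hf.mono_measure (Measure.restrict_mono hsub le_rfl)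
    exact h2.integrable (by norm_num)
  refine h1.continuousOn_mul (hφ.mono fun t ht => ?_)
  rw [Set.uIcc_of_le hab] at ht
  exact ha.trans ht.1

lemma green_add_smul {φ ψ u v f g : ℝ → ℂ} (hφ : ContinuousOn φ (Set.Ici 0))
    (hψ : ContinuousOn ψ (Set.Ici 0)) (lψ : MemLp ψ 2 mu0)
    (hf : MemLp f 2 mu0) (hg : MemLp g 2 mu0) (k : ℂ) {x : ℝ} (hx : 0 ≤ x) :
    green φ ψ u v (fun t => f t + k * g t) x = green φ ψ u v f x + k * green φ ψ u v g x := by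
  have h1 : ∀ θ : ℝ → ℂ, ContinuousOn θ (Set.Ici 0) →
      ∫ t in (0:ℝ)..x, θ t * (f t + k * g t) =
        (∫ t in (0:ℝ)..x, θ t * f t) + k * ∫ t in (0:ℝ)..x, θ t * g t := fun θ hθ => by
    rw [← intervalIntegral.integral_const_mul, ← intervalIntegral.integral_add
      (contOn_ii hθ hf le_rfl hx) ((contOn_ii hθ hg le_rfl hx).const_mul k)]
    congr 1; ext t; ring
  have h2 : ∫ t, ψ t * (f t + k * g t) ∂mu0 = (∫ t, ψ t * f t ∂mu0) + k * ∫ t, ψ t * g t ∂mu0 := by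
    have i1 : Integrable (fun t => ψ t * f t) mu0 := lψ.integrable_mul hf
    have i2 : Integrable (fun t => k * (ψ t * g t)) mu0 := (lψ.integrable_mul hg).const_mul k
    rw [← integral_const_mul, ← integral_add i1 i2]
    congr 1; ext t; ring
  rw [green, green, green, h1 φ hφ, h1 ψ hψ, h2]
  ring

lemma isSol_green {Q φ φ' ψ ψ' f : ℝ → ℂ} (hφ : IsSol Q 0 φ φ') (hψ : IsSol Q 0 ψ ψ')
    (hW : φ 0 * ψ' 0 - φ' 0 * ψ 0 = -1) (hf : MemLp f 2 mu0) :
    IsSol Q f (green φ ψ φ ψ f) (green φ ψ φ' ψ' f) := by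
  have hA : LocACOn (fun x => ∫ t in (0:ℝ)..x, φ t * f t) (fun t => φ t * f t) 0 :=
    ⟨fun b hb => contOn_ii hφ.1.continuousOn hf le_rfl hb, fun b _ => by simp⟩
  have hB : LocACOn (fun x => (∫ t, ψ t * f t ∂mu0) - ∫ t in (0:ℝ)..x, ψ t * f t)
      (fun t => -(ψ t * f t)) 0 :=
    ⟨fun b hb => (contOn_ii hψ.1.continuousOn hf le_rfl hb).neg, fun b _ => by
      simp [sub_eq_add_neg]⟩
  refine ⟨((hψ.1.mul hA).add (hφ.1.mul hB)).congr_ae (Eventually.of_forall fun x _ => ?_),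
    ((hψ.2.mul hA).add (hφ.2.mul hB)).congr_ae (Eventually.of_forall fun x hx => ?_)⟩
  · simp only [green]; ring
  · have := hφ.wronskian_const hψ hx
    rw [hW] at this
    simp only [green, Pi.zero_apply]
    linear_combination f x * this

lemma sq_ii {f : ℝ → ℂ} (hf : MemLp f 2 mu0) {a b : ℝ} (ha : 0 ≤ a) (hab : a ≤ b) :
    IntervalIntegrable (fun t => ‖f t‖ ^ 2) volume a b := by
  rw [intervalIntegrable_iff_integrableOn_Ioc_of_le hab]
  exact IntegrableOn.mono_set (t := Set.Ici 0) hf.norm.integrable_sq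
    fun t ht => (ha.trans ht.1.le : 0 ≤ t)

lemma integral_sq_le {f : ℝ → ℂ} (hf : MemLp f 2 mu0) {a b : ℝ} (ha : 0 ≤ a) (hab : a ≤ b) :
    ∫ t in a..b, ‖f t‖ ^ 2 ≤ ∫ t, ‖f t‖ ^ 2 ∂mu0 := by
  rw [intervalIntegral.integral_of_le hab]
  exact setIntegral_mono_set (t := Set.Ici 0) hf.norm.integrable_sq
    (Eventually.of_forall fun _ => by positivity)
    (Eventually.of_forall fun t ht => (ha.trans (le_of_lt ht.1) : 0 ≤ t))

/-- Cauchy–Schwarz on an interval. -/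
lemma norm_interval_mul_sq_le {φ f : ℝ → ℂ} (hφ : ContinuousOn φ (Set.Ici 0))
    (hf : MemLp f 2 mu0) {a b : ℝ} (ha : 0 ≤ a) (hab : a ≤ b) :
    ‖∫ t in a..b, φ t * f t‖ ^ 2 ≤ (∫ t in a..b, ‖φ t‖ ^ 2) * ∫ t, ‖f t‖ ^ 2 ∂mu0 := by
  have hsub : Set.Ioc a b ⊆ Set.Ici 0 := fun t ht => ha.trans ht.1.le
  have h1 : MemLp f 2 (volume.restrict (Set.Ioc a b)) :=
    hf.mono_measure (Measure.restrict_mono hsub le_rfl)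
  have h2 : MemLp φ 2 (volume.restrict (Set.Ioc a b)) := by
    rw [memLp_two_iff_integrable_sq_norm
      ((hφ.mono hsub).aestronglyMeasurable measurableSet_Ioc)]
    have : ContinuousOn (fun t => ‖φ t‖ ^ 2) (Set.Icc a b) :=
      (hφ.norm.pow 2).mono fun t ht => ha.trans ht.1
    exact this.integrableOn_Icc.mono_set Set.Ioc_subset_Icc_self
  have h3 := norm_integral_mul_sq_le h2 h1
  have h4 := integral_sq_le hf ha hab
  rw [intervalIntegral.integral_of_le hab] at h4 ⊢
  rw [intervalIntegral.integral_of_le hab]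
  refine h3.trans ?_
  gcongr

/-- The part of `∫ ψ f` beyond `x`. -/
lemma tail_eq {ψ f : ℝ → ℂ} (lψ : MemLp ψ 2 mu0) (hf : MemLp f 2 mu0) {x : ℝ} (hx : 0 ≤ x) :
    (∫ t, ψ t * f t ∂mu0) - ∫ t in (0:ℝ)..x, ψ t * f t = ∫ t in Set.Ioi x, ψ t * f t := by
  have h1 : IntegrableOn (fun t => ψ t * f t) (Set.Ioi 0) :=
    IntegrableOn.mono_set (t := Set.Ici 0) (lψ.integrable_mul hf) Set.Ioi_subset_Ici_self
  rw [integral_Ici_eq_integral_Ioi, ← intervalIntegral.integral_Ioi_sub_Ioi h1 hx]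
  ring

lemma norm_tail_sq_le {ψ f : ℝ → ℂ} (lψ : MemLp ψ 2 mu0) (hf : MemLp f 2 mu0) {x : ℝ}
    (hx : 0 ≤ x) : ‖(∫ t, ψ t * f t ∂mu0) - ∫ t in (0:ℝ)..x, ψ t * f t‖ ^ 2 ≤
      (∫ t, ‖ψ t‖ ^ 2 ∂mu0) * ∫ t, ‖f t‖ ^ 2 ∂mu0 := by
  rw [tail_eq lψ hf hx]
  have hsub : Set.Ioi x ⊆ Set.Ici 0 := fun t ht => hx.trans (le_of_lt ht)
  have hm := Measure.restrict_mono hsub (le_refl (volume : Measure ℝ))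
  refine (norm_integral_mul_sq_le (lψ.mono_measure hm) (hf.mono_measure hm)).trans ?_
  have h1 : ∀ g : ℝ → ℂ, MemLp g 2 mu0 →
      ∫ t in Set.Ioi x, ‖g t‖ ^ 2 ≤ ∫ t, ‖g t‖ ^ 2 ∂mu0 := fun g hg =>
    setIntegral_mono_set hg.norm.integrable_sq
      (Eventually.of_forall fun _ => by positivity) (Eventually.of_forall hsub)
  have h2 : 0 ≤ ∫ t, ‖ψ t‖ ^ 2 ∂mu0 := integral_nonneg fun _ => by positivity
  have h3 : 0 ≤ ∫ t in Set.Ioi x, ‖f t‖ ^ 2 := integral_nonneg fun _ => by positivity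
  exact mul_le_mul (h1 ψ lψ) (h1 f hf) h3 h2

lemma tendsto_tail {ψ f : ℝ → ℂ} (lψ : MemLp ψ 2 mu0) (hf : MemLp f 2 mu0) :
    Tendsto (fun x => (∫ t, ψ t * f t ∂mu0) - ∫ t in (0:ℝ)..x, ψ t * f t) atTop (𝓝 0) := by
  have h1 : IntegrableOn (fun t => ψ t * f t) (Set.Ioi 0) :=
    IntegrableOn.mono_set (t := Set.Ici 0) (lψ.integrable_mul hf) Set.Ioi_subset_Ici_self
  have h2 := intervalIntegral_tendsto_integral_Ioi 0 h1 tendsto_id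
  rw [integral_Ici_eq_integral_Ioi, ← sub_self (∫ t in Set.Ioi (0:ℝ), ψ t * f t)]
  exact tendsto_const_nhds.sub h2

lemma comb_sq_le {a b u v : ℂ} {Φ Ψ N : ℝ} (ha : ‖a‖ ^ 2 ≤ Φ * N) (hb : ‖b‖ ^ 2 ≤ Ψ * N) :
    ‖v * a + u * b‖ ^ 2 ≤ 2 * (‖v‖ ^ 2 * Φ + ‖u‖ ^ 2 * Ψ) * N := by
  have h1 : ‖v * a + u * b‖ ≤ ‖v‖ * ‖a‖ + ‖u‖ * ‖b‖ := by
    simpa only [norm_mul] using norm_add_le (v * a) (u * b)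
  have h2 : ‖v * a + u * b‖ ^ 2 ≤ (‖v‖ * ‖a‖ + ‖u‖ * ‖b‖) ^ 2 := by gcongr
  have h3 : ‖v‖ ^ 2 * ‖a‖ ^ 2 ≤ ‖v‖ ^ 2 * (Φ * N) := by gcongr
  have h4 : ‖u‖ ^ 2 * ‖b‖ ^ 2 ≤ ‖u‖ ^ 2 * (Ψ * N) := by gcongr
  nlinarith [sq_nonneg (‖v‖ * ‖a‖ - ‖u‖ * ‖b‖)]

lemma sq_cont_ii {g : ℝ → ℂ} (hg : ContinuousOn g (Set.Ici 0)) {a b : ℝ} (ha : 0 ≤ a)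
    (hab : a ≤ b) : IntervalIntegrable (fun t => ‖g t‖ ^ 2) volume a b :=
  ContinuousOn.intervalIntegrable ((hg.norm.pow 2).mono fun t ht => by
    rw [Set.uIcc_of_le hab] at ht
    exact ha.trans ht.1)

/-- The Green operator is bounded in `L₂`. Beyond `x₁` the energy inequality is applied to the
solution that agrees at `n` with a multiple of `ψ`, and `n` is sent to infinity. -/
lemma Coer.green_bound {Q p p' : ℝ → ℂ} {x₁ c : ℝ} (hC : Coer Q p p' x₁ c)
    {φ φ' ψ ψ' : ℝ → ℂ} (hφ : IsSol Q 0 φ φ') (hψ : IsSol Q 0 ψ ψ')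
    (hW : φ 0 * ψ' 0 - φ' 0 * ψ 0 = -1) (lψ : MemLp ψ 2 mu0)
    (hneg : ∀ X, x₁ ≤ X → (en p ψ ψ' X).re ≤ 0) :
    ∃ K, 0 ≤ K ∧ ∀ f, MemLp f 2 mu0 → ∀ X, x₁ ≤ X →
      ∫ t in (0:ℝ)..X, ‖green φ ψ φ ψ f t‖ ^ 2 ≤ K * ∫ t, ‖f t‖ ^ 2 ∂mu0 := by
  have hc := hC.hc
  have hx₁ := hC.hx
  have cφ := hφ.1.continuousOn
  have cψ := hψ.1.continuousOn
  set Φ := ∫ t in (0:ℝ)..x₁, ‖φ t‖ ^ 2 with hΦ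
  set Ψ := ∫ t, ‖ψ t‖ ^ 2 ∂mu0 with hΨ
  have hΦ0 : 0 ≤ Φ := intervalIntegral.integral_nonneg hx₁ fun _ _ => by positivity
  have hΨ0 : 0 ≤ Ψ := integral_nonneg fun _ => by positivity
  set k₁ : ℝ → ℝ := fun t => 2 * (‖ψ t‖ ^ 2 * Φ + ‖φ t‖ ^ 2 * Ψ) with hk₁
  have hk₁i : IntervalIntegrable k₁ volume 0 x₁ :=
    (((sq_cont_ii cψ le_rfl hx₁).mul_const Φ).add
      ((sq_cont_ii cφ le_rfl hx₁).mul_const Ψ)).const_mul 2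
  set k₂ : ℝ := 2 * (‖ψ' x₁‖ ^ 2 * Φ + ‖φ' x₁‖ ^ 2 * Ψ) with hk₂
  set K₁ := ∫ t in (0:ℝ)..x₁, k₁ t with hK₁
  set K₂ := 1 / c ^ 2 * (2 / c * (‖p x₁‖ / 2 * (k₁ x₁ + k₂) + 1 / (2 * c))) with hK₂
  have hK₁0 : 0 ≤ K₁ := intervalIntegral.integral_nonneg hx₁ fun _ _ => by
    simp only [hk₁]; positivity
  have hk₁x : 0 ≤ k₁ x₁ := by simp only [hk₁]; positivity
  have hk₂0 : 0 ≤ k₂ := by positivity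
  refine ⟨K₁ + 2 * K₂, by positivity, fun f hf X hX => ?_⟩
  set N := ∫ t, ‖f t‖ ^ 2 ∂mu0 with hN
  have hN0 : 0 ≤ N := integral_nonneg fun _ => by positivity
  set y := green φ ψ φ ψ f with hy
  set y' := green φ ψ φ' ψ' f with hy'
  have hs : IsSol Q f y y' := isSol_green hφ hψ hW hf
  set B : ℝ → ℂ := fun x => (∫ t, ψ t * f t ∂mu0) - ∫ t in (0:ℝ)..x, ψ t * f t with hB
  have hAb : ∀ x, 0 ≤ x → x ≤ x₁ → ‖∫ t in (0:ℝ)..x, φ t * f t‖ ^ 2 ≤ Φ * N := by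
    intro x hx hxx
    refine (norm_interval_mul_sq_le cφ hf le_rfl hx).trans ?_
    gcongr
    rw [hΦ, ← intervalIntegral.integral_add_adjacent_intervals (sq_cont_ii cφ le_rfl hx)
      (sq_cont_ii cφ hx hxx)]
    have : 0 ≤ ∫ t in x..x₁, ‖φ t‖ ^ 2 :=
      intervalIntegral.integral_nonneg hxx fun _ _ => by positivity
    linarith
  have hpart1 : ∫ t in (0:ℝ)..x₁, ‖y t‖ ^ 2 ≤ K₁ * N := by
    rw [hK₁, ← intervalIntegral.integral_mul_const]
    refine intervalIntegral.integral_mono_on hx₁ (sq_cont_ii hs.1.continuousOn le_rfl hx₁)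
      (hk₁i.mul_const N) fun t ht => ?_
    exact comb_sq_le (hAb t ht.1 ht.2) (norm_tail_sq_le lψ hf ht.1)
  have hpart2 : ∀ n, X ≤ n → ∫ t in x₁..X, ‖y t + (-B n) * φ t‖ ^ 2 ≤ K₂ * N := by
    intro n hn
    have hxn : x₁ ≤ n := hX.trans hn
    have hz : IsSol Q f (fun x => y x + (-B n) * φ x) (fun x => y' x + (-B n) * φ' x) :=
      (hs.add_mul hφ (-B n)).congr_rhs (Eventually.of_forall fun x _ => by simp)
    have he := hC.energy hz le_rfl hxn (sq_ii hf hx₁ hxn)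
    have hen : (en p (fun x => y x + (-B n) * φ x) (fun x => y' x + (-B n) * φ' x) n).re ≤ 0 := by
      set A := ∫ t in (0:ℝ)..n, φ t * f t with hA
      have e1 : y n + (-B n) * φ n = A * ψ n := by
        simp only [hy, green, hB, hA]; ring
      have e2 : y' n + (-B n) * φ' n = A * ψ' n := by
        simp only [hy', green, hB, hA]; ring
      have e3 : en p (fun x => y x + (-B n) * φ x) (fun x => y' x + (-B n) * φ' x) n =
          ((‖A‖ ^ 2 : ℝ) : ℂ) * en p ψ ψ' n := by
        simp only [en]
        rw [e1, e2, map_mul, ← normSq_eq_norm_sq, ← mul_conj A]; ring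
      rw [e3, re_ofReal_mul]
      exact mul_nonpos_of_nonneg_of_nonpos (by positivity) (hneg n hxn)
    have hBd : ‖B x₁ - B n‖ ^ 2 ≤ Ψ * N := by
      have e1 : B x₁ - B n = ∫ t in x₁..n, ψ t * f t := by
        have := intervalIntegral.integral_add_adjacent_intervals
          (contOn_ii cψ hf le_rfl hx₁) (contOn_ii cψ hf hx₁ hxn)
        simp only [hB]; rw [← this]; ring
      rw [e1]
      refine (norm_interval_mul_sq_le cψ hf hx₁ hxn).trans ?_
      gcongr
      exact integral_sq_le lψ hx₁ hxn
    have hv : ‖y x₁ + (-B n) * φ x₁‖ ^ 2 ≤ k₁ x₁ * N := by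
      have e1 : y x₁ + (-B n) * φ x₁ =
          ψ x₁ * (∫ t in (0:ℝ)..x₁, φ t * f t) + φ x₁ * (B x₁ - B n) := by
        simp only [hy, green, hB]; ring
      rw [e1]
      exact comb_sq_le (hAb x₁ hx₁ le_rfl) hBd
    have hv' : ‖y' x₁ + (-B n) * φ' x₁‖ ^ 2 ≤ k₂ * N := by
      have e1 : y' x₁ + (-B n) * φ' x₁ =
          ψ' x₁ * (∫ t in (0:ℝ)..x₁, φ t * f t) + φ' x₁ * (B x₁ - B n) := by
        simp only [hy', green, hB]; ring
      rw [e1]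
      exact comb_sq_le (hAb x₁ hx₁ le_rfl) hBd
    have hst : -(en p (fun x => y x + (-B n) * φ x) (fun x => y' x + (-B n) * φ' x) x₁).re ≤
        ‖p x₁‖ / 2 * (k₁ x₁ + k₂) * N := by
      refine (neg_le_abs _).trans ((abs_re_le_norm _).trans ?_)
      simp only [en]
      rw [norm_mul, norm_mul, norm_conj, norm_conj]
      set a := ‖y x₁ + (-B n) * φ x₁‖
      set b := ‖y' x₁ + (-B n) * φ' x₁‖
      have : b * (‖p x₁‖ * a) ≤ ‖p x₁‖ / 2 * (a ^ 2 + b ^ 2) := by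
        have h0 := norm_nonneg (p x₁)
        nlinarith [mul_nonneg h0 (sq_nonneg (a - b))]
      have h2 : ‖p x₁‖ / 2 * (a ^ 2 + b ^ 2) ≤ ‖p x₁‖ / 2 * (k₁ x₁ * N + k₂ * N) := by gcongr
      linarith
    have hfN : 1 / (2 * c) * ∫ t in x₁..n, ‖f t‖ ^ 2 ≤ 1 / (2 * c) * N := by
      gcongr
      exact integral_sq_le hf hx₁ hxn
    set zz : ℝ → ℂ := fun x => y x + (-B n) * φ x
    set zz' : ℝ → ℂ := fun x => y' x + (-B n) * φ' x
    have hdn : ∫ t in x₁..n, dens p zz zz' t ≤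
        2 / c * (‖p x₁‖ / 2 * (k₁ x₁ + k₂) + 1 / (2 * c)) * N := by
      rw [mul_assoc, div_mul_eq_mul_div, le_div_iff₀ hc]
      linarith
    calc ∫ t in x₁..X, ‖zz t‖ ^ 2 ≤ ∫ t in x₁..n, ‖zz t‖ ^ 2 := by
          rw [← intervalIntegral.integral_add_adjacent_intervals
            (sq_cont_ii hz.1.continuousOn hx₁ hX) (sq_cont_ii hz.1.continuousOn (hx₁.trans hX) hn)]
          have : 0 ≤ ∫ t in X..n, ‖zz t‖ ^ 2 :=
            intervalIntegral.integral_nonneg hn fun _ _ => by positivity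
          linarith
      _ ≤ 1 / c ^ 2 * ∫ t in x₁..n, dens p zz zz' t := hC.sq_le_dens hz le_rfl hxn
      _ ≤ 1 / c ^ 2 * (2 / c * (‖p x₁‖ / 2 * (k₁ x₁ + k₂) + 1 / (2 * c)) * N) := by gcongr
      _ = K₂ * N := by rw [hK₂]; ring
  have hpart3 : ∫ t in x₁..X, ‖y t‖ ^ 2 ≤ 2 * (K₂ * N) := by
    have h1 : ∀ n, X ≤ n → ∫ t in x₁..X, ‖y t‖ ^ 2 ≤
        2 * (K₂ * N) + 2 * ‖B n‖ ^ 2 * ∫ t in x₁..X, ‖φ t‖ ^ 2 := by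
      intro n hn
      have hz : ContinuousOn (fun x => y x + (-B n) * φ x) (Set.Ici 0) :=
        hs.1.continuousOn.add (continuousOn_const.mul cφ)
      have i1 := sq_cont_ii hz hx₁ hX
      have i2 := sq_cont_ii cφ hx₁ hX
      have h2 : ∫ t in x₁..X, ‖y t‖ ^ 2 ≤
          ∫ t in x₁..X, (2 * ‖y t + (-B n) * φ t‖ ^ 2 + 2 * ‖B n‖ ^ 2 * ‖φ t‖ ^ 2) := by
        refine intervalIntegral.integral_mono_on hX (sq_cont_ii hs.1.continuousOn hx₁ hX)
          ((i1.const_mul 2).add (i2.const_mul _)) fun t _ => ?_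
        have h3 : ‖y t‖ ≤ ‖y t + (-B n) * φ t‖ + ‖B n‖ * ‖φ t‖ := by
          rw [← norm_mul]
          have := norm_add_le (y t + (-B n) * φ t) (B n * φ t)
          rwa [show y t + (-B n) * φ t + B n * φ t = y t by ring] at this
        have h4 : ‖y t‖ ^ 2 ≤ (‖y t + (-B n) * φ t‖ + ‖B n‖ * ‖φ t‖) ^ 2 := by gcongr
        nlinarith [sq_nonneg (‖y t + (-B n) * φ t‖ - ‖B n‖ * ‖φ t‖)]
      rw [intervalIntegral.integral_add (i1.const_mul 2) (i2.const_mul _),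
        intervalIntegral.integral_const_mul, intervalIntegral.integral_const_mul] at h2
      have := hpart2 n hn
      linarith
    have h2 : Tendsto (fun n => 2 * (K₂ * N) + 2 * ‖B n‖ ^ 2 * ∫ t in x₁..X, ‖φ t‖ ^ 2) atTop
        (𝓝 (2 * (K₂ * N))) := by
      have h3 : Tendsto B atTop (𝓝 0) := tendsto_tail lψ hf
      have h4 := (((h3.norm.pow 2).const_mul 2).mul_const
        (∫ t in x₁..X, ‖φ t‖ ^ 2)).const_add (2 * (K₂ * N))
      simpa using h4
    refine ge_of_tendsto h2 ?_
    filter_upwards [eventually_ge_atTop X] with n hn using h1 n hn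
  rw [← intervalIntegral.integral_add_adjacent_intervals
    (sq_cont_ii hs.1.continuousOn le_rfl hx₁) (sq_cont_ii hs.1.continuousOn hx₁ hX)]
  linarith

lemma lp_norm_sq (f : Lp ℂ 2 mu0) : ‖f‖ ^ 2 = ∫ t, ‖f t‖ ^ 2 ∂mu0 := by
  have h1 : inner ℂ f f = ∫ t, inner ℂ (f t) (f t) ∂mu0 := L2.inner_def f f
  rw [inner_self_eq_norm_sq_to_K] at h1
  simp_rw [inner_self_eq_norm_sq_to_K] at h1
  have h2 : (∫ t, (((‖f t‖ ^ 2 : ℝ)) : ℂ) ∂mu0) = ((∫ t, ‖f t‖ ^ 2 ∂mu0 : ℝ) : ℂ) :=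
    integral_ofReal
  have h3 : (((‖f‖ ^ 2 : ℝ)) : ℂ) = ((∫ t, ‖f t‖ ^ 2 ∂mu0 : ℝ) : ℂ) := by
    rw [← h2]; push_cast; exact h1
  exact_mod_cast h3

/-- Pairing with a square integrable function, as a bounded functional. -/
lemma exists_pairing {ψ : ℝ → ℂ} (lψ : MemLp ψ 2 mu0) :
    ∃ ℓ : Lp ℂ 2 mu0 →L[ℂ] ℂ, ∀ f, ℓ f = ∫ t, ψ t * f t ∂mu0 := by
  have hIntg : ∀ f : Lp ℂ 2 mu0, Integrable (fun t => ψ t * f t) mu0 := fun f =>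
    lψ.integrable_mul (Lp.memLp f)
  let L : Lp ℂ 2 mu0 →ₗ[ℂ] ℂ :=
    { toFun := fun f => ∫ t, ψ t * f t ∂mu0
      map_add' := fun f g => by
        rw [← integral_add (hIntg f) (hIntg g)]
        refine integral_congr_ae ?_
        filter_upwards [Lp.coeFn_add f g] with t ht
        rw [ht, Pi.add_apply, mul_add]
      map_smul' := fun k f => by
        rw [RingHom.id_apply, smul_eq_mul, ← integral_const_mul]
        refine integral_congr_ae ?_
        filter_upwards [Lp.coeFn_smul k f] with t ht
        rw [ht, Pi.smul_apply, smul_eq_mul]; ring }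
  refine ⟨L.mkContinuous (√(∫ t, ‖ψ t‖ ^ 2 ∂mu0)) fun f => ?_, fun f => rfl⟩
  have h1 := norm_integral_mul_sq_le lψ (Lp.memLp f)
  rw [← lp_norm_sq] at h1
  refine (Real.le_sqrt_of_sq_le h1).trans (le_of_eq ?_)
  rw [Real.sqrt_mul (integral_nonneg fun _ => by positivity), Real.sqrt_sq (norm_nonneg f)]

/-- The resolvent for the boundary condition `β₀ y 0 + β₁ y' 0 = 0`, provided that the decaying
solution `ψ` violates it. The boundary data of the solution depend on `f` through a single bounded
functional `ℓ`. -/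
lemma Coer.exists_resolvent {Q p p' : ℝ → ℂ} {x₁ c : ℝ} (hC : Coer Q p p' x₁ c)
    (hQ : ∀ b, 0 ≤ b → IntervalIntegrable Q volume 0 b)
    {ψ ψ' : ℝ → ℂ} (hψ : IsSol Q 0 ψ ψ') (lψ : MemLp ψ 2 mu0)
    (hneg : ∀ X, x₁ ≤ X → (en p ψ ψ' X).re ≤ 0) {β₀ β₁ : ℂ} (hβ : β₀ * ψ 0 + β₁ * ψ' 0 ≠ 0) :
    ∃ (R : Lp ℂ 2 mu0 →L[ℂ] Lp ℂ 2 mu0) (ℓ : Lp ℂ 2 mu0 →L[ℂ] ℂ) (a b : ℂ),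
      β₀ * a + β₁ * b = 0 ∧ ∀ f : Lp ℂ 2 mu0, ∃ y y', IsSol Q f y y' ∧
        y 0 = a * ℓ f ∧ y' 0 = b * ℓ f ∧ (R f : ℝ → ℂ) =ᵐ[mu0] y := by
  set D := β₀ * ψ 0 + β₁ * ψ' 0 with hD
  obtain ⟨φ, φ', hφ, φ0, φ0'⟩ := exists_sol hQ (-β₁ / D) (β₀ / D)
  have hW : φ 0 * ψ' 0 - φ' 0 * ψ 0 = -1 := by
    rw [φ0, φ0']; field_simp; rw [hD]; ring
  obtain ⟨K, hK0, hK⟩ := hC.green_bound hφ hψ hW lψ hneg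
  obtain ⟨ℓ, hℓ⟩ := exists_pairing lψ
  have hx₁ := hC.hx
  set G : Lp ℂ 2 mu0 → ℝ → ℂ := fun f => green φ ψ φ ψ f with hG
  have hs : ∀ f : Lp ℂ 2 mu0, IsSol Q f (G f) (green φ ψ φ' ψ' f) := fun f =>
    isSol_green hφ hψ hW (Lp.memLp f)
  have hm : ∀ f : Lp ℂ 2 mu0, MemLp (G f) 2 mu0 := fun f => by
    refine memLp_of_bound le_rfl (hs f).1.continuousOn
      (K := K * ∫ t, ‖f t‖ ^ 2 ∂mu0) fun X hX => ?_
    have h1 := hK f (Lp.memLp f) (max X x₁) (le_max_right _ _)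
    rw [← intervalIntegral.integral_add_adjacent_intervals
      (sq_cont_ii (hs f).1.continuousOn le_rfl hX)
      (sq_cont_ii (hs f).1.continuousOn hX (le_max_left _ _))] at h1
    have : 0 ≤ ∫ t in X..(max X x₁), ‖G f t‖ ^ 2 :=
      intervalIntegral.integral_nonneg (le_max_left _ _) fun _ _ => by positivity
    linarith
  have hbd : ∀ f : Lp ℂ 2 mu0, ∫ t, ‖G f t‖ ^ 2 ∂mu0 ≤ K * ‖f‖ ^ 2 := fun f => by
    have h1 : IntegrableOn (fun t => ‖G f t‖ ^ 2) (Set.Ioi 0) :=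
      IntegrableOn.mono_set (t := Set.Ici 0) (hm f).norm.integrable_sq Set.Ioi_subset_Ici_self
    have h2 := intervalIntegral_tendsto_integral_Ioi 0 h1 tendsto_id
    rw [integral_Ici_eq_integral_Ioi, lp_norm_sq]
    refine le_of_tendsto h2 ?_
    filter_upwards [eventually_ge_atTop x₁] with X hX
    exact hK f (Lp.memLp f) X hX
  have hae : ∀ {u v : ℝ → ℂ}, (∀ t, 0 ≤ t → u t = v t) → u =ᵐ[mu0] v := fun h =>
    (ae_restrict_iff' measurableSet_Ici).2 (Eventually.of_forall h)
  let T : Lp ℂ 2 mu0 →ₗ[ℂ] Lp ℂ 2 mu0 :=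
    { toFun := fun f => (hm f).toLp
      map_add' := fun f g => by
        rw [← MemLp.toLp_add]
        refine MemLp.toLp_congr _ _ (hae fun t ht => ?_)
        have h1 : ((f + g : Lp ℂ 2 mu0) : ℝ → ℂ) =ᵐ[mu0] fun t => f t + 1 * g t := by
          filter_upwards [Lp.coeFn_add f g] with t ht
          rw [ht, Pi.add_apply, one_mul]
        simp only [hG, Pi.add_apply]
        rw [green_congr h1 ht, green_add_smul hφ.1.continuousOn hψ.1.continuousOn lψ
          (Lp.memLp f) (Lp.memLp g) 1 ht, one_mul]
      map_smul' := fun k f => by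
        rw [RingHom.id_apply, ← MemLp.toLp_const_smul]
        refine MemLp.toLp_congr _ _ (hae fun t ht => ?_)
        have h1 : ((k • f : Lp ℂ 2 mu0) : ℝ → ℂ) =ᵐ[mu0] fun t => f t + (k - 1) * f t := by
          filter_upwards [Lp.coeFn_smul k f] with t ht
          rw [ht, Pi.smul_apply, smul_eq_mul]; ring
        simp only [hG, Pi.smul_apply, smul_eq_mul]
        rw [green_congr h1 ht, green_add_smul hφ.1.continuousOn hψ.1.continuousOn lψ
          (Lp.memLp f) (Lp.memLp f) (k - 1) ht]
        ring }
  refine ⟨T.mkContinuous (√K) fun f => ?_, ℓ, -β₁ / D, β₀ / D, by ring, fun f =>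
    ⟨G f, _, hs f, ?_, ?_, (hm f).coeFn_toLp⟩⟩
  · have h1 : ‖T f‖ ^ 2 ≤ K * ‖f‖ ^ 2 := by
      rw [lp_norm_sq]
      refine le_trans (le_of_eq (integral_congr_ae ?_)) (hbd f)
      filter_upwards [(hm f).coeFn_toLp] with t ht
      exact congrArg (fun w => ‖w‖ ^ 2) ht
    refine (Real.le_sqrt_of_sq_le h1).trans (le_of_eq ?_)
    rw [Real.sqrt_mul hK0, Real.sqrt_sq (norm_nonneg f)]
  · simp [hG, green, hℓ, φ0]
  · simp [green, hℓ, φ0']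

/-! ### Eigenvalues -/

lemma memL2_iff {y : ℝ → ℂ} : MemL2 (fun _ => 1) y ↔ MemLp y 2 mu0 := by
  constructor
  · rintro ⟨h1, h2⟩
    rw [memLp_two_iff_integrable_sq_norm h1]
    simpa [IntegrableOn] using h2
  · intro h
    refine ⟨h.1, ?_⟩
    have := h.norm.integrable_sq
    simpa [IntegrableOn] using this

/-- The eigenvalues of the operator with potential `q` and boundary condition
`α₀ y 0 + α₁ y' 0 = 0`. -/
def eigs (q : ℝ → ℂ) (α₀ α₁ : ℂ) : Set ℂ :=
  {lam : ℂ | ∃ y y', IsSol (fun x => q x - lam) 0 y y' ∧ NontrivialSol y ∧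
    MemL2 (fun _ => 1) y ∧ α₀ * y 0 + α₁ * y' 0 = 0}

lemma IsSol.nontrivial {Q y y' : ℝ → ℂ} (hQ : ∀ b, 0 ≤ b → IntervalIntegrable Q volume 0 b)
    (hy : IsSol Q 0 y y') (h0 : y 0 ≠ 0 ∨ y' 0 ≠ 0) : NontrivialSol y := by
  by_contra hn
  have hz : ∀ x, 0 ≤ x → y x = 0 := fun x hx => by
    by_contra h; exact hn ⟨x, hx, h⟩
  -- a positive point at which `y` and `y'` vanish simultaneously
  obtain ⟨x, hx, hx'⟩ : ∃ x, 0 < x ∧ y' x = 0 := by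
    by_contra! hcon
    have h3 : volume (Set.Ioo (0:ℝ) 1) = 0 := by
      refine measure_mono_null (fun x hx => ?_) (ae_iff.1 hy.1.ae_hasDerivAt)
      intro h
      have h1 : HasDerivAt y 0 x := (hasDerivAt_const x (0:ℂ)).congr_of_eventuallyEq (by
        filter_upwards [Ioi_mem_nhds hx.1] with s hs using hz s (le_of_lt hs))
      exact hcon x hx.1 ((h hx.1).unique h1)
    rw [Real.volume_Ioo, ENNReal.ofReal_eq_zero] at h3
    linarith
  obtain ⟨u, u', hu, u0, u0'⟩ := exists_sol hQ 1 0
  obtain ⟨v, v', hv, v0, v0'⟩ := exists_sol hQ 0 1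
  have e1 := hy.wronskian_const hu hx.le
  have e2 := hy.wronskian_const hv hx.le
  rw [hz x hx.le, hx', u0, u0'] at e1
  rw [hz x hx.le, hx', v0, v0'] at e2
  simp at e1 e2
  rcases h0 with h | h
  · exact h e2.symm
  · exact h e1

lemma CondA.exists_coer {q q' : ℝ → ℂ} {x₀ C : ℝ} (hx₀ : 0 ≤ x₀) (hA : CondA q q' x₀ C)
    (hqinf : Tendsto (fun x => ‖q x‖) atTop atTop) (z : ℂ) :
    ∃ x₁ c, Coer (fun x => q x - z) (sqrtQ q) (sqrtQD q q') x₁ c := by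
  have hC : 0 < C := hA.2.2.2.2.1
  obtain ⟨x₂, hx₂⟩ := eventually_atTop.1 (hqinf.eventually_ge_atTop ((2 * ‖z‖ / C) ^ 2))
  refine ⟨max x₀ x₂, C / 2, hA.coer hx₀ (le_max_left _ _) (by positivity) (by linarith)
    fun x hx => ?_⟩
  have h1 := hx₂ x ((le_max_right _ _).trans hx)
  rw [← sqrtQ_sq q x, norm_mul, ← sq] at h1
  have h2 : 2 * ‖z‖ / C ≤ ‖sqrtQ q x‖ := le_of_sq_le_sq h1 (norm_nonneg _)
  rw [div_le_iff₀ hC] at h2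
  refine (re_le_norm _).trans ?_
  rw [norm_mul, norm_conj]
  nlinarith [norm_nonneg (sqrtQ q x)]

lemma CondA.mem_eigs_iff {q q' : ℝ → ℂ} {x₀ C : ℝ} (hx₀ : 0 ≤ x₀) (hA : CondA q q' x₀ C)
    (hqinf : Tendsto (fun x => ‖q x‖) atTop atTop) {α₀ α₁ lam : ℂ} {y y' : ℝ → ℂ}
    (hy : IsSol (fun x => q x - lam) 0 y y') (h0 : y 0 ≠ 0 ∨ y' 0 ≠ 0) (ly : MemLp y 2 mu0) :
    lam ∈ eigs q α₀ α₁ ↔ α₀ * y 0 + α₁ * y' 0 = 0 := by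
  have hQ := hA.ii lam
  refine ⟨?_, fun h => ⟨y, y', hy, hy.nontrivial hQ h0, memL2_iff.2 ly, h⟩⟩
  rintro ⟨w, w', hw, ⟨x, hx, hwx⟩, lw, hbw⟩
  rw [memL2_iff] at lw
  obtain ⟨x₁, c, hC⟩ := hA.exists_coer hx₀ hqinf lam
  obtain ⟨ψ, ψ', hψ, ψ0, lψ, lψ', -⟩ := hC.exists_decaying hQ
  obtain ⟨k, hk⟩ := hw.proportional hQ hψ ψ0 (wronskian_eq_zero hw hψ lw lψ lψ')
  obtain ⟨j, hj⟩ := hy.proportional hQ hψ ψ0 (wronskian_eq_zero hy hψ ly lψ lψ')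
  have hk0 : k ≠ 0 := fun h => hwx (by rw [(hk x hx).1, h, zero_mul])
  have h1 : k * (α₀ * ψ 0 + α₁ * ψ' 0) = 0 := by
    rw [← hbw, (hk 0 le_rfl).1, (hk 0 le_rfl).2]; ring
  rw [(hj 0 le_rfl).1, (hj 0 le_rfl).2]
  linear_combination j * ((mul_eq_zero.1 h1).resolve_left hk0)

/-- A sufficiently large negative number is not an eigenvalue: the energy with the frozen
multiplier `p X` and a correction `h |ψ|²` (where `h X = 0` and `h 0` compensates the boundary
term) is increasing on `[0, X]`, nonnegative at `0` and nonpositive at `X`. -/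
lemma CondA.exists_not_mem {q q' : ℝ → ℂ} {x₀ C : ℝ} (hx₀ : 0 ≤ x₀) (hA : CondA q q' x₀ C)
    (hqinf : Tendsto (fun x => ‖q x‖) atTop atTop) {α₀ α₁ : ℂ} (hα : ‖α₀‖ + ‖α₁‖ ≠ 0) :
    ∃ lam, lam ∉ eigs q α₀ α₁ := by
  have hC0 : 0 < C := hA.2.2.2.2.1
  set X := max x₀ 1 with hX
  have hX0 : 0 < X := lt_of_lt_of_le one_pos (le_max_right _ _)
  have hX1 : x₀ ≤ X := le_max_left _ _
  set P := sqrtQ q X with hP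
  set r := P.re with hr
  have hr0 : 0 < r := hC0.trans_le (hA.le_re hX1)
  set K := ‖α₀ / α₁‖ * ‖P‖ with hK
  set J := ∫ t in (0:ℝ)..X, ‖P‖ * ‖q t‖ with hJ
  set M := (K + J) / X with hM
  have hqi : ∀ b, 0 ≤ b → IntervalIntegrable q volume 0 b := fun b hb => by
    simpa using hA.ii 0 b hb
  set k : ℝ → ℝ := fun t => ‖P‖ * ‖q t‖ - M with hk
  have hki : ∀ b, 0 ≤ b → IntervalIntegrable k volume 0 b := fun b hb =>
    ((hqi b hb).norm.const_mul _).sub intervalIntegrable_const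
  set h : ℝ → ℝ := fun x => K + ∫ t in (0:ℝ)..x, k t with hh
  have hac : LocACOn (fun x => (h x : ℂ)) (fun x => (k x : ℂ)) 0 := by
    refine ⟨fun b hb => ⟨(hki b hb).1.ofReal, (hki b hb).2.ofReal⟩, fun x _ => ?_⟩
    simp only [hh, intervalIntegral.integral_same, add_zero]
    rw [intervalIntegral.integral_ofReal]
    push_cast; ring
  have h0 : h 0 = K := by simp [hh]
  have hXz : h X = 0 := by
    simp only [hh, hk]
    rw [intervalIntegral.integral_sub ((hqi X hX0.le).norm.const_mul _) intervalIntegrable_const,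
      intervalIntegral.integral_const, ← hJ, hM]
    simp only [sub_zero, smul_eq_mul]
    field_simp; ring
  set H := K + ∫ t in (0:ℝ)..X, ‖k t‖ with hH
  have hHb : ∀ x, 0 ≤ x → x ≤ X → |h x| ≤ H := by
    intro x hx hxX
    have h1 : |∫ t in (0:ℝ)..x, k t| ≤ ∫ t in (0:ℝ)..x, ‖k t‖ := by
      rw [← Real.norm_eq_abs]
      exact intervalIntegral.norm_integral_le_integral_norm hx
    have h2 : 0 ≤ ∫ t in x..X, ‖k t‖ := intervalIntegral.integral_nonneg hxX fun _ _ => norm_nonneg _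
    have h3 := intervalIntegral.integral_add_adjacent_intervals (hki x hx).norm
      ((hki x hx).symm.trans (hki X hX0.le)).norm
    have h4 : |K| = K := abs_of_nonneg (by positivity)
    calc |h x| ≤ |K| + |∫ t in (0:ℝ)..x, k t| := abs_add_le _ _
      _ ≤ H := by rw [h4, hH, ← h3]; linarith
  have hH0 : 0 ≤ H := (abs_nonneg _).trans (hHb 0 le_rfl hX0.le)
  have hJ0 : 0 ≤ J := intervalIntegral.integral_nonneg hX0.le fun _ _ => by positivity
  have hM0 : 0 ≤ M := by positivity
  set t := (M + 2 * H ^ 2 / r + r / 2) / r with ht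
  have ht0 : 0 ≤ t := by positivity
  have htr : t * r = M + 2 * H ^ 2 / r + r / 2 := by rw [ht]; field_simp
  refine ⟨-(t : ℂ), fun hmem => ?_⟩
  have hco : Coer (fun x => q x - (-(t : ℂ))) (sqrtQ q) (sqrtQD q q') X C := by
    refine hA.coer hx₀ hX1 hC0 le_rfl fun x hx => ?_
    rw [sub_self, zero_mul, ← ofReal_neg, re_ofReal_mul, conj_re]
    exact mul_nonpos_of_nonpos_of_nonneg (by linarith)
      (hC0.le.trans (hA.le_re (hX1.trans hx)))
  obtain ⟨ψ, ψ', hψ, ψ0, lψ, -, hneg⟩ := hco.exists_decaying (hA.ii _)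
  have hb := (hA.mem_eigs_iff hx₀ hqinf hψ ψ0 lψ).1 hmem
  have hb0 : ‖ψ' 0‖ * ‖ψ 0‖ ≤ ‖α₀ / α₁‖ * ‖ψ 0‖ ^ 2 := by
    by_cases h1 : α₁ = 0
    · have h2 : α₀ ≠ 0 := fun h => hα (by rw [h, h1]; simp)
      rw [h1, zero_mul, add_zero] at hb
      rw [(mul_eq_zero.1 hb).resolve_left h2]; simp
    · have h2 : ψ' 0 = -(α₀ / α₁) * ψ 0 := by
        field_simp; linear_combination hb
      rw [h2, norm_mul, norm_neg]
      exact le_of_eq (by ring)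
  have hae := ((hψ.2.mul (((LocACOn.const (starRingEnd ℂ P) 0)).mul hψ.1.conj))).add
    (hac.mul (hψ.1.mul hψ.1.conj))
  have hgc : ContinuousOn (fun x => r / 2 * (‖ψ' x‖ ^ 2 + ‖ψ x‖ ^ 2)) (Set.Icc 0 X) :=
    (continuousOn_const.mul ((hψ.2.continuousOn.norm.pow 2).add
      (hψ.1.continuousOn.norm.pow 2))).mono fun _ h => h.1
  have hmain := hae.re_le le_rfl hX0.le (g := fun x => r / 2 * (‖ψ' x‖ ^ 2 + ‖ψ x‖ ^ 2))
    (ContinuousOn.intervalIntegrable (by rwa [Set.uIcc_of_le hX0.le]))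
    (Eventually.of_forall fun x hx hxX => by
      have hHx := hHb x hx hxX
      set a := ψ x
      set b := ψ' x
      have e1 : ((q x - -(t:ℂ)) * a - (0 : ℝ → ℂ) x) * (starRingEnd ℂ P * starRingEnd ℂ a) +
          b * (0 * starRingEnd ℂ a + starRingEnd ℂ P * starRingEnd ℂ b) +
          ((k x : ℂ) * (a * starRingEnd ℂ a) +
            (h x : ℂ) * (b * starRingEnd ℂ a + a * starRingEnd ℂ b)) =
          (‖b‖ ^ 2 : ℝ) * starRingEnd ℂ P + (‖a‖ ^ 2 : ℝ) * (q x * starRingEnd ℂ P) +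
          ((t * ‖a‖ ^ 2 : ℝ) : ℂ) * starRingEnd ℂ P + ((k x * ‖a‖ ^ 2 : ℝ) : ℂ) +
          (h x : ℂ) * (b * starRingEnd ℂ a + a * starRingEnd ℂ b) := by
        push_cast
        rw [← mul_conj' a, ← mul_conj' b, Pi.zero_apply]; ring
      rw [e1]
      simp only [add_re, re_ofReal_mul, conj_re, ofReal_re]
      have e2 : -(‖q x‖ * ‖P‖) ≤ (q x * starRingEnd ℂ P).re := by
        rw [← norm_conj P, ← norm_mul]; exact (abs_le.1 (abs_re_le_norm _)).1
      have e3 : |(b * starRingEnd ℂ a).re + (a * starRingEnd ℂ b).re| ≤ 2 * (‖a‖ * ‖b‖) := by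
        have i1 := abs_re_le_norm (b * starRingEnd ℂ a)
        have i2 := abs_re_le_norm (a * starRingEnd ℂ b)
        rw [norm_mul, norm_conj] at i1 i2
        linarith [abs_add_le (b * starRingEnd ℂ a).re (a * starRingEnd ℂ b).re]
      have e4 : -(H * (2 * (‖a‖ * ‖b‖))) ≤
          h x * ((b * starRingEnd ℂ a).re + (a * starRingEnd ℂ b).re) := by
        refine (abs_le.1 ?_).1
        rw [abs_mul]
        exact mul_le_mul hHx e3 (abs_nonneg _) hH0
      have e5 : H * (2 * (‖a‖ * ‖b‖)) ≤ r / 2 * ‖b‖ ^ 2 + 2 * H ^ 2 / r * ‖a‖ ^ 2 := by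
        have i1 : r / 2 * ‖b‖ ^ 2 + 2 * H ^ 2 / r * ‖a‖ ^ 2 - H * (2 * (‖a‖ * ‖b‖)) =
          r / 2 * (‖b‖ - 2 * H / r * ‖a‖) ^ 2 := by field_simp; ring
        have i2 : 0 ≤ r / 2 * (‖b‖ - 2 * H / r * ‖a‖) ^ 2 := by positivity
        linarith
      have e6 := mul_le_mul_of_nonneg_left e2 (sq_nonneg ‖a‖)
      have e7 : k x * ‖a‖ ^ 2 = ‖P‖ * ‖q x‖ * ‖a‖ ^ 2 - M * ‖a‖ ^ 2 := by
        simp only [hk]; ring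
      have e8 : t * ‖a‖ ^ 2 * r = M * ‖a‖ ^ 2 + 2 * H ^ 2 / r * ‖a‖ ^ 2 + r / 2 * ‖a‖ ^ 2 := by
        linear_combination ‖a‖ ^ 2 * htr
      rw [← hr]
      rw [e7, e8]
      linarith)
  have hnX := hneg X le_rfl
  have hX2 : (ψ' X * (starRingEnd ℂ P * starRingEnd ℂ (ψ X)) +
      (h X : ℂ) * (ψ X * starRingEnd ℂ (ψ X))).re ≤ 0 := by
    rw [hXz, ofReal_zero, zero_mul, add_zero]; exact hnX
  have h00 : 0 ≤ (ψ' 0 * (starRingEnd ℂ P * starRingEnd ℂ (ψ 0)) +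
      (h 0 : ℂ) * (ψ 0 * starRingEnd ℂ (ψ 0))).re := by
    rw [h0, mul_conj', add_re, ← ofReal_pow, ← ofReal_mul, ofReal_re]
    have i1 := (abs_le.1 (abs_re_le_norm (ψ' 0 * (starRingEnd ℂ P * starRingEnd ℂ (ψ 0))))).1
    rw [norm_mul, norm_mul, norm_conj, norm_conj] at i1
    have i2 := mul_le_mul_of_nonneg_right hb0 (norm_nonneg P)
    rw [hK]
    linarith
  have hpos : 0 < ∫ x in (0:ℝ)..X, r / 2 * (‖ψ' x‖ ^ 2 + ‖ψ x‖ ^ 2) := by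
    refine intervalIntegral.integral_pos hX0 hgc (fun x _ => by positivity)
      ⟨0, ⟨le_rfl, hX0.le⟩, ?_⟩
    rcases ψ0 with h | h
    · have := norm_pos_iff.2 h
      positivity
    · have := norm_pos_iff.2 h
      positivity
  linarith

/-- Near `z` an eigenvalue problem reduces to the zeros of a function that is analytic at `z`:
the square integrable solutions for `q - lam` are perturbed from the one for `q - z` through the
resolvent at `z` of an auxiliary boundary condition, and `lam` is an eigenvalue when their boundary
form vanishes. -/
lemma CondA.dichotomy {q q' : ℝ → ℂ} {x₀ C : ℝ} (hx₀ : 0 ≤ x₀) (hA : CondA q q' x₀ C)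
    (hqinf : Tendsto (fun x => ‖q x‖) atTop atTop) (α₀ α₁ z : ℂ) :
    (∀ᶠ lam in 𝓝 z, lam ∈ eigs q α₀ α₁) ∨ ∀ᶠ lam in 𝓝[≠] z, lam ∉ eigs q α₀ α₁ := by
  obtain ⟨x₁, c, hC⟩ := hA.exists_coer hx₀ hqinf z
  obtain ⟨ψ, ψ', hψ, ψ0, lψ, lψ', hneg⟩ := hC.exists_decaying (hA.ii z)
  have hβ : starRingEnd ℂ (ψ 0) * ψ 0 + starRingEnd ℂ (ψ' 0) * ψ' 0 ≠ 0 := by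
    rw [conj_mul', conj_mul', ← ofReal_pow, ← ofReal_pow, ← ofReal_add, Ne, ofReal_eq_zero]
    rcases ψ0 with h | h
    · have := norm_pos_iff.2 h
      positivity
    · have := norm_pos_iff.2 h
      positivity
  obtain ⟨R, ℓ, a, b, hab, hR⟩ := hC.exists_resolvent (hA.ii z) hψ lψ hneg hβ
  set g : ℂ → Lp ℂ 2 mu0 := fun lam => Ring.inverse (1 - (lam - z) • R) lψ.toLp with hg
  set F : ℂ → ℂ := fun lam =>
    (α₀ * ψ 0 + α₁ * ψ' 0) + (lam - z) * ((α₀ * a + α₁ * b) * ℓ (g lam)) with hF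
  have hlin : AnalyticAt ℂ (fun lam : ℂ => (lam - z) • R) z := by fun_prop
  have hinv : AnalyticAt ℂ (fun lam : ℂ => Ring.inverse (1 - (lam - z) • R)) z := by
    have h1 : AnalyticAt ℂ (fun A : Lp ℂ 2 mu0 →L[ℂ] Lp ℂ 2 mu0 => Ring.inverse (1 - A))
        ((z - z) • R) := by
      rw [sub_self, zero_smul]; exact analyticAt_inverse_one_sub ℂ _
    exact h1.comp (f := fun lam : ℂ => (lam - z) • R) hlin
  have hFa : AnalyticAt ℂ F z := by
    have h1 : AnalyticAt ℂ (fun lam => ℓ (g lam)) z :=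
      ((ℓ.comp (ContinuousLinearMap.apply ℂ (Lp ℂ 2 mu0) lψ.toLp)).analyticAt _).comp hinv
    exact analyticAt_const.add ((analyticAt_id.sub analyticAt_const).mul
      (analyticAt_const.mul h1))
  have hunit : ∀ᶠ lam in 𝓝 z, IsUnit (1 - (lam - z) • R) := by
    have h1 : ContinuousAt (fun lam : ℂ => 1 - (lam - z) • R) z :=
      continuousAt_const.sub hlin.continuousAt
    refine h1.eventually (Units.isOpen.mem_nhds ?_)
    simp
  have hiff : ∀ᶠ lam in 𝓝 z, (lam ∈ eigs q α₀ α₁ ↔ F lam = 0) := by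
    filter_upwards [hunit] with lam hu
    have h1 : (1 - (lam - z) • R) (g lam) = lψ.toLp := by
      have := Ring.mul_inverse_cancel _ hu
      exact congrArg (fun A : Lp ℂ 2 mu0 →L[ℂ] Lp ℂ 2 mu0 => A lψ.toLp) this
    have h2 : g lam = lψ.toLp + (lam - z) • R (g lam) := by
      rw [← h1]; simp
    obtain ⟨Y, Y', hY, hY0, hY0', hRY⟩ := hR (g lam)
    set y : ℝ → ℂ := fun x => ψ x + (lam - z) * Y x with hy
    set y' : ℝ → ℂ := fun x => ψ' x + (lam - z) * Y' x with hy'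
    have hyg : (g lam : ℝ → ℂ) =ᵐ[mu0] y := by
      have h3 := Lp.coeFn_add lψ.toLp ((lam - z) • R (g lam))
      rw [← h2] at h3
      filter_upwards [h3, lψ.coeFn_toLp, Lp.coeFn_smul (lam - z) (R (g lam)), hRY]
        with x e1 e2 e3 e4
      rw [e1, Pi.add_apply, e2, e3, Pi.smul_apply, e4, smul_eq_mul]
    have hyg' : ∀ᵐ x : ℝ, 0 ≤ x → (g lam : ℝ → ℂ) x = y x :=
      (ae_restrict_iff' measurableSet_Ici).1 hyg
    have hsol := hψ.add_mul hY (lam - z)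
    have hsol' : IsSol (fun x => q x - lam) 0 y y' := ⟨hsol.1, hsol.2.congr_ae (by
      filter_upwards [hyg'] with x e1 hx
      rw [e1 hx]
      simp only [Pi.zero_apply, hy]; ring)⟩
    have ly : MemLp y 2 mu0 := (memLp_congr_ae hyg).1 (Lp.memLp _)
    have hβy : starRingEnd ℂ (ψ 0) * y 0 + starRingEnd ℂ (ψ' 0) * y' 0 ≠ 0 := by
      have : starRingEnd ℂ (ψ 0) * y 0 + starRingEnd ℂ (ψ' 0) * y' 0 =
          starRingEnd ℂ (ψ 0) * ψ 0 + starRingEnd ℂ (ψ' 0) * ψ' 0 := by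
        simp only [hy, hy', hY0, hY0']
        linear_combination (lam - z) * ℓ (g lam) * hab
      rwa [this]
    have hne : y 0 ≠ 0 ∨ y' 0 ≠ 0 := by
      by_contra! h3
      rw [h3.1, h3.2] at hβy
      simp at hβy
    rw [hA.mem_eigs_iff hx₀ hqinf hsol' hne ly]
    have : F lam = α₀ * y 0 + α₁ * y' 0 := by
      simp only [hF, hy, hy', hY0, hY0']; ring
    rw [this]
  rcases hFa.eventually_eq_zero_or_eventually_ne_zero with h | h
  · left
    filter_upwards [h, hiff] with lam h1 h2 using h2.2 h1
  · right
    filter_upwards [h, hiff.filter_mono nhdsWithin_le_nhds] with lam h1 h2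
    exact fun h3 => h1 (h2.1 h3)

/-- A set that near every point either fills a neighbourhood or avoids a punctured one, and that is
not the whole plane, has no accumulation point, by connectedness. -/
lemma not_accPt_of_dichotomy {S : Set ℂ}
    (h : ∀ z, (∀ᶠ w in 𝓝 z, w ∈ S) ∨ ∀ᶠ w in 𝓝[≠] z, w ∉ S) (hS : ∃ w, w ∉ S) (z : ℂ) :
    ¬ AccPt z (𝓟 S) := by
  have hcl : IsClosed (interior S) := by
    rw [← isOpen_compl_iff, isOpen_iff_mem_nhds]
    intro w hw
    rcases h w with h1 | h1
    · exact absurd (mem_interior_iff_mem_nhds.2 h1) hw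
    · rw [eventually_nhdsWithin_iff] at h1
      filter_upwards [h1] with v hv
      by_cases hvw : v = w
      · rw [hvw]; exact hw
      · exact fun h2 => hv hvw (interior_subset h2)
  have hem : interior S = ∅ := by
    rcases isClopen_iff.1 ⟨hcl, isOpen_interior⟩ with h1 | h1
    · exact h1
    · obtain ⟨w, hw⟩ := hS
      exact absurd (interior_subset (h1 ▸ Set.mem_univ w)) hw
  have h2 : ∀ᶠ w in 𝓝[≠] z, w ∉ S := by
    rcases h z with h1 | h1
    · have : z ∈ interior S := mem_interior_iff_mem_nhds.2 h1
      rw [hem] at this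
      exact absurd this (Set.notMem_empty z)
    · exact h1
  rw [accPt_iff_frequently_nhdsNE]
  exact fun h3 => h3 h2

/-- If `q` satisfies condition A for `x ≥ x₀` and `|q(x)| → ∞`, then the
spectrum of `L_U` (the set of eigenvalues) has no accumulation point in `ℂ`,
and away from it the resolvent exists as a bounded operator in `L₂(ℝ₊)`. -/
theorem statement13 (q q' : ℝ → ℂ) (x₀ C : ℝ) (hx₀ : 0 ≤ x₀)
    (hA : CondA q q' x₀ C)
    (hqinf : Tendsto (fun x => ‖q x‖) atTop atTop)
    (α₀ α₁ : ℂ) (hα : ‖α₀‖ + ‖α₁‖ ≠ 0) :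
    (∀ z : ℂ, ¬ AccPt z (Filter.principal {lam : ℂ | ∃ y y',
      IsSol (fun x => q x - lam) 0 y y' ∧ NontrivialSol y ∧
      MemL2 (fun _ => 1) y ∧ α₀ * y 0 + α₁ * y' 0 = 0})) ∧
    ∀ lam : ℂ, lam ∉ {lam : ℂ | ∃ y y',
        IsSol (fun x => q x - lam) 0 y y' ∧ NontrivialSol y ∧
        MemL2 (fun _ => 1) y ∧ α₀ * y 0 + α₁ * y' 0 = 0} →
      ∃ R : Lp ℂ 2 (volume.restrict (Set.Ici (0:ℝ))) →L[ℂ]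
          Lp ℂ 2 (volume.restrict (Set.Ici (0:ℝ))),
        ∀ f : Lp ℂ 2 (volume.restrict (Set.Ici (0:ℝ))),
          ∃ y y', IsSol (fun x => q x - lam) (⇑f) y y' ∧
            α₀ * y 0 + α₁ * y' 0 = 0 ∧
            (⇑(R f) : ℝ → ℂ) =ᵐ[volume.restrict (Set.Ici (0:ℝ))] y := by
  refine ⟨not_accPt_of_dichotomy (hA.dichotomy hx₀ hqinf α₀ α₁)
    (hA.exists_not_mem hx₀ hqinf hα), fun lam hlam => ?_⟩
  obtain ⟨x₁, c, hC⟩ := hA.exists_coer hx₀ hqinf lam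
  obtain ⟨ψ, ψ', hψ, ψ0, lψ, lψ', hneg⟩ := hC.exists_decaying (hA.ii lam)
  have hb : α₀ * ψ 0 + α₁ * ψ' 0 ≠ 0 := fun h =>
    hlam ((hA.mem_eigs_iff hx₀ hqinf hψ ψ0 lψ).2 h)
  obtain ⟨R, ℓ, a, b, hab, hR⟩ := hC.exists_resolvent (hA.ii lam) hψ lψ hneg hb
  refine ⟨R, fun f => ?_⟩
  obtain ⟨y, y', hy, hy0, hy0', hae⟩ := hR f
  refine ⟨y, y', hy, ?_, hae⟩
  rw [hy0, hy0']
  linear_combination ℓ f * hab
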